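/- Let 1 < p_1 ≤ p_2 ≤ ... be a generalized (Beurling) prime system with counting function π_P(x) = Li(x) + O(x^α) for some fixed 0 < α < 1. Write ζ_P(s) = ∑_n d_n/ν_n^s and 1/ζ_P(s) = ∑_n e_n/ν_n^s over the generalized integers ν_n. Then lim_{T→∞} (1/T)∫_1^T |ζ_P(1+it)|² dt = ∑_n d_n²/ν_n², and the series converges. -/

import Mathlib

/-!
The Dirichlet series of `Z` does not converge absolutely on the 1-line, so the mean square is computed
through Dirichlet polynomials that approximate `Z (1 + i t)` in mean square over `[1, T]`. For a
single Dirichlet polynomial with distinct frequencies the mean square is the sum of the squared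
coefficients (`mean_tendsto`), and mean squares pass to the limit (`mean_limit`). The approximation
has an arithmetic and an analytic part.

*Counting.* By the Euler product and the uniqueness of Dirichlet series with nonnegative coefficients
(`BeurlingPrimes.transfer`), the multiplicities `d m` count finitely supported exponent vectors
`f : ℕ →₀ ℕ`. Numbers composed of small primes only are few by Rankin's method, while removing a large
prime factor from the others reduces the count in a short interval to that of primes, known from
`π_P(x) = Li(x) + O(x ^ α)`. The outcome, `BeurlingPrimes.short_sum`, bounds `∑ d m / ν m` over
`|log ν m - l| ≤ h` by `h + l ^ (-M)` up to a fixed power of `l`, for every `M`. This replaces the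
asymptotic formula for the number of generalized integers: it gives the convergence of
`∑ d m ^ 2 / ν m ^ 2`, and also, through the mean square of a Dirichlet polynomial against a Gaussian
(`gauss_mean`), a bound for the tails of the series of `Z (1 + δ + i t)` in mean square over `[1, T]`,
uniform as long as `δ` is at least a small negative power of `T` (`BeurlingZeta.mean_tail`).

*Shifting.* With `δ` such a power of `T`, the quotient `Z (1 + i t) / Z (1 + δ + i t)` tends to `1`
uniformly in `1 ≤ t ≤ T` (`BeurlingZeta.shift`, `BeurlingZeta.exists_shift`). Its logarithm is a sum
over primes, which is cut at `exp n` for `n` of the order of a still smaller power of `T`: below the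
cut the total change is at most of order `δ * n ^ 2`, and above it both prime sums are small by partial
summation, since `|t|` is bounded below and the error `x ^ α` in the prime counting function saves
`exp (-(1 - α) * n)`, which beats every power of `T` (`BeurlingPrimes.log_diff`).
-/

open Filter Asymptotics

/-! ### Counting generalized primes -/

/-- A Beurling generalized prime system `1 < p 0 ≤ p 1 ≤ …` with counting function
`π_P(x) = Li(x) + O(x ^ α)` for some `0 < α < 1`. The counting function is an infinite sum of
indicators, so repeated values of `p` are counted with multiplicity. -/
structure BeurlingPrimes (p : ℕ → ℝ) (α : ℝ) : Prop where
  one_lt : ∀ j, 1 < p j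
  mono : Monotone p
  tendsto : Tendsto p atTop atTop
  pos : 0 < α
  lt_one : α < 1
  count : (fun x : ℝ => (∑' j, if p j ≤ x then (1:ℝ) else 0)
        - ∫ t in (2:ℝ)..x, 1 / Real.log t) =O[atTop] (fun x : ℝ => x ^ α)

open Classical in
/-- The indices of the generalized primes that are at most `x`, as a finset. The value `∅` for an
infinite index set is never taken when `p` tends to infinity. -/
noncomputable def primesLE (p : ℕ → ℝ) (x : ℝ) : Finset ℕ :=
  if h : {j | p j ≤ x}.Finite then h.toFinset else ∅

namespace BeurlingPrimes

variable {p : ℕ → ℝ} {α : ℝ}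

lemma mem_primesLE (H : BeurlingPrimes p α) {x : ℝ} {j : ℕ} : j ∈ primesLE p x ↔ p j ≤ x := by
  have h : {j | p j ≤ x}.Finite := by
    have h1 : ∀ᶠ j in atTop, x < p j := H.tendsto.eventually_gt_atTop x
    obtain ⟨N, hN⟩ := eventually_atTop.1 h1
    refine (Set.finite_lt_nat N).subset fun j hj => ?_
    by_contra hc
    exact absurd (hN j (not_lt.1 hc)) (not_lt.2 hj)
  simp [primesLE, h]

lemma primesLE_mono (H : BeurlingPrimes p α) {a b : ℝ} (hab : a ≤ b) :
    primesLE p a ⊆ primesLE p b := fun _ hj =>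
  H.mem_primesLE.2 ((H.mem_primesLE.1 hj).trans hab)

lemma card_mono (H : BeurlingPrimes p α) {a b : ℝ} (hab : a ≤ b) :
    ((primesLE p a).card : ℝ) ≤ (primesLE p b).card := by
  exact_mod_cast Finset.card_le_card (H.primesLE_mono hab)

lemma tsum_eq_card (H : BeurlingPrimes p α) (x : ℝ) :
    (∑' j, if p j ≤ x then (1:ℝ) else 0) = (primesLE p x).card := by
  rw [tsum_eq_sum (s := primesLE p x)]
  · rw [Finset.sum_congr rfl (g := fun _ => (1:ℝ))]
    · simp
    · intro j hj
      simp [H.mem_primesLE.1 hj]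
  · intro j hj
    rw [H.mem_primesLE] at hj
    simp [hj]

lemma inv_log_integrable {a b : ℝ} (ha : 1 < a) (hab : a ≤ b) :
    IntervalIntegrable (fun t => 1 / Real.log t) MeasureTheory.volume a b := by
  apply ContinuousOn.intervalIntegrable
  rw [Set.uIcc_of_le hab]
  intro t ht
  have ht1 : 1 < t := lt_of_lt_of_le ha ht.1
  apply ContinuousAt.continuousWithinAt
  have := Real.log_pos ht1
  exact ContinuousAt.div continuousAt_const (Real.continuousAt_log (by linarith)) this.ne'

lemma integral_inv_log_le {a b : ℝ} (ha : 1 < a) (hab : a ≤ b) :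
    ∫ t in a..b, 1 / Real.log t ≤ (b - a) / Real.log a := by
  calc ∫ t in a..b, 1 / Real.log t ≤ ∫ t in a..b, 1 / Real.log a := by
        apply intervalIntegral.integral_mono_on hab (inv_log_integrable ha hab) (by simp)
        intro t ht
        have := Real.log_pos ha
        have := Real.log_le_log (by linarith) ht.1
        gcongr
    _ = (b - a) / Real.log a := by simp [div_eq_mul_inv]

/-- The counting hypothesis between two points: the value of `Li` at the lower end cancels, and both
error terms are absorbed in `b ^ α`. -/
lemma count_interval (H : BeurlingPrimes p α) : ∃ C x0 : ℝ, 0 < C ∧ 3 ≤ x0 ∧ ∀ a b, x0 ≤ a → a ≤ b →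
    |((primesLE p b).card : ℝ) - (primesLE p a).card - ∫ t in a..b, 1 / Real.log t| ≤ C * b ^ α := by
  obtain ⟨c, hc, hb⟩ := H.count.exists_pos
  obtain ⟨x1, hx1⟩ := eventually_atTop.1 hb.bound
  refine ⟨2 * c, max x1 3, by positivity, le_max_right _ _, fun a b ha hab => ?_⟩
  have h1a : x1 ≤ a := (le_max_left _ _).trans ha
  have h3a : 3 ≤ a := (le_max_right _ _).trans ha
  have e1 := hx1 a h1a
  have e2 := hx1 b (h1a.trans hab)
  rw [H.tsum_eq_card, Real.norm_eq_abs, Real.norm_of_nonneg (by positivity)] at e1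
  rw [H.tsum_eq_card, Real.norm_eq_abs, Real.norm_of_nonneg
    (Real.rpow_nonneg (by linarith) _)] at e2
  have e3 : a ^ α ≤ b ^ α := Real.rpow_le_rpow (by linarith) hab H.pos.le
  have e4 := intervalIntegral.integral_add_adjacent_intervals
    (inv_log_integrable (a := 2) (b := a) (by norm_num) (by linarith))
    (inv_log_integrable (a := a) (b := b) (by linarith) hab)
  rw [← e4] at e2
  have e5 : c * a ^ α ≤ c * b ^ α := by gcongr
  rw [abs_le] at e1 e2 ⊢
  constructor <;> linarith [e1.1, e1.2, e2.1, e2.2]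

/-- Short intervals contain the expected order of generalized primes, up to the error `b ^ α`. -/
lemma count_short (H : BeurlingPrimes p α) : ∃ C : ℝ, 0 < C ∧ ∀ a b, 0 ≤ a → a ≤ b → 1 ≤ b →
    ((primesLE p b).card : ℝ) - (primesLE p a).card ≤ C * ((b - a) + b ^ α) := by
  obtain ⟨C, x0, hC, hx0, h⟩ := H.count_interval
  set A : ℝ := ((primesLE p x0).card : ℝ) with hA
  have hA0 : 0 ≤ A := by positivity
  refine ⟨A + C + 1, by positivity, fun a b ha hab hb => ?_⟩
  have key : ∀ a b, x0 ≤ a → a ≤ b →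
      ((primesLE p b).card : ℝ) - (primesLE p a).card ≤ (b - a) + C * b ^ α := by
    intro a b ha hab
    have h1 := (abs_le.1 (h a b ha hab)).2
    have h2 := integral_inv_log_le (a := a) (b := b) (by linarith) hab
    have h3 : 1 ≤ Real.log a := by
      rw [Real.le_log_iff_exp_le (by linarith)]
      linarith [Real.exp_one_lt_d9]
    have h4 : (b - a) / Real.log a ≤ b - a := div_le_self (by linarith) h3
    linarith
  have hbα : 1 ≤ b ^ α := Real.one_le_rpow hb H.pos.le
  have hca : (0:ℝ) ≤ (primesLE p a).card := by positivity
  have hba : 0 ≤ b - a := by linarith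
  rcases le_total b x0 with hbx | hbx
  · have := H.card_mono hbx
    nlinarith
  · rcases le_total a x0 with hax | hax
    · have := key x0 b le_rfl hbx
      have : b - x0 ≤ b - a := by linarith
      nlinarith
    · have := key a b hax hab
      nlinarith

/-- Chebyshev bound on the interval `(exp k, exp (k + 1)]`. -/
lemma count_exp (H : BeurlingPrimes p α) : ∃ C : ℝ, 0 < C ∧ ∀ k : ℕ,
    ((primesLE p (Real.exp (k + 1))).card : ℝ) - (primesLE p (Real.exp k)).card
      ≤ C * (Real.exp k / (k + 1)) := by
  obtain ⟨C, x0, hC, hx0, h⟩ := H.count_interval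
  have hβ : 0 < 1 - α := by linarith [H.lt_one]
  set A : ℝ := ((primesLE p (Real.exp 1 * x0)).card : ℝ) with hA
  have hA0 : 0 ≤ A := by positivity
  refine ⟨A + 6 + 3 * C * (1 / (1 - α) + 1), by positivity, fun k => ?_⟩
  have hk1 : (k:ℝ) + 1 ≤ Real.exp k := Real.add_one_le_exp _
  have hone : 1 ≤ Real.exp k / (k + 1) := by
    rw [le_div_iff₀ (by positivity)]; linarith
  have he : Real.exp (k + 1) = Real.exp 1 * Real.exp k := by rw [add_comm, Real.exp_add]
  have he3 : Real.exp 1 ≤ 3 := by linarith [Real.exp_one_lt_d9]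
  rcases le_total (Real.exp k) x0 with hk | hk
  · have h1 : ((primesLE p (Real.exp (k + 1))).card : ℝ) ≤ A := by
      apply H.card_mono
      rw [he]; gcongr
    have h2 : (0:ℝ) ≤ (primesLE p (Real.exp k)).card := by positivity
    have h3 : 0 ≤ 3 * C * (1 / (1 - α) + 1) := by positivity
    nlinarith
  · have hk0 : (1:ℝ) ≤ k := by
      rcases Nat.eq_zero_or_pos k with h0 | h0
      · subst h0; simp at hk; linarith
      · exact_mod_cast h0
    have h1 := (abs_le.1 (h _ _ hk (Real.exp_le_exp.2 (by linarith : (k:ℝ) ≤ k + 1)))).2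
    have h2 := integral_inv_log_le (a := Real.exp k) (b := Real.exp (k+1)) (by linarith)
      (Real.exp_le_exp.2 (by linarith : (k:ℝ) ≤ k + 1))
    rw [Real.log_exp] at h2
    have h3 : (Real.exp (k + 1) - Real.exp k) / k ≤ 6 * (Real.exp k / (k + 1)) := by
      rw [he, ← mul_div_assoc, div_le_div_iff₀ (by positivity) (by positivity)]
      have : (Real.exp 1 * Real.exp k - Real.exp k) ≤ 3 * Real.exp k := by nlinarith [Real.exp_pos k]
      nlinarith [Real.exp_pos k]
    have h4 : Real.exp (k + 1) ^ α ≤ 3 * (1 / (1 - α) + 1) * (Real.exp k / (k + 1)) := by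
      rw [← Real.exp_mul]
      have e1 : Real.exp ((k+1) * α) = Real.exp α * (Real.exp k * Real.exp (-((1 - α) * k))) := by
        rw [← Real.exp_add, ← Real.exp_add]; congr 1; ring
      have e2 : Real.exp α ≤ 3 := by
        refine le_trans (Real.exp_le_exp.2 H.lt_one.le) he3
      have e3 : (k + 1) * Real.exp (-((1 - α) * k)) ≤ 1 / (1 - α) + 1 := by
        have f1 : (1 - α) * k ≤ Real.exp ((1 - α) * k) := by
          linarith [Real.add_one_le_exp ((1 - α) * k)]
        have f2 : 1 ≤ Real.exp ((1 - α) * k) := Real.one_le_exp (by positivity)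
        rw [Real.exp_neg, ← div_eq_mul_inv, div_le_iff₀ (Real.exp_pos _)]
        have f3 : (k:ℝ) ≤ 1 / (1 - α) * Real.exp ((1 - α) * k) := by
          rw [one_div, ← div_eq_inv_mul, le_div_iff₀ hβ]; linarith
        linarith
      rw [e1]
      have e4 : Real.exp (-((1 - α) * k)) ≤ (1 / (1 - α) + 1) / (k + 1) := by
        rw [le_div_iff₀ (by positivity)]; linarith
      calc Real.exp α * (Real.exp k * Real.exp (-((1 - α) * k)))
          ≤ 3 * (Real.exp k * ((1 / (1 - α) + 1) / (k + 1))) := by gcongr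
        _ = _ := by ring
    have h5 := mul_le_mul_of_nonneg_left h4 hC.le
    have h6 : 0 ≤ A * (Real.exp k / (k + 1)) := by positivity
    linarith

/-- Mertens-type upper bound, obtained by summing `count_exp` over `k < n`. -/
lemma sum_inv_le (H : BeurlingPrimes p α) : ∃ C : ℝ, 0 < C ∧ ∀ n : ℕ,
    ∑ j ∈ primesLE p (Real.exp n), 1 / p j ≤ C * (1 + Real.log (n + 1)) := by
  obtain ⟨C, hC, h⟩ := H.count_exp
  have key : ∀ n : ℕ, ∑ j ∈ primesLE p (Real.exp n), 1 / p j ≤ C * harmonic n := by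
    intro n
    induction n with
    | zero =>
      rw [Finset.sum_eq_zero]
      · simp
      · intro j hj
        rw [H.mem_primesLE] at hj
        have := H.one_lt j
        simp at hj; linarith
    | succ n ih =>
      have hsub : primesLE p (Real.exp n) ⊆ primesLE p (Real.exp (n + 1)) :=
        H.primesLE_mono (Real.exp_le_exp.2 (by linarith))
      push_cast
      rw [← Finset.sum_sdiff hsub]
      have h1 : ∑ j ∈ primesLE p (Real.exp (n + 1)) \ primesLE p (Real.exp n), 1 / p j
          ≤ C / (n + 1) := by
        calc _ ≤ ∑ j ∈ primesLE p (Real.exp (n + 1)) \ primesLE p (Real.exp n), 1 / Real.exp n := by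
              apply Finset.sum_le_sum
              intro j hj
              rw [Finset.mem_sdiff, H.mem_primesLE, H.mem_primesLE, not_le] at hj
              have := hj.2
              gcongr
          _ = (((primesLE p (Real.exp (n + 1))).card : ℝ) - (primesLE p (Real.exp n)).card)
                * (1 / Real.exp n) := by
              rw [Finset.sum_const, nsmul_eq_mul, Finset.card_sdiff_of_subset hsub,
                Nat.cast_sub (Finset.card_le_card hsub)]
          _ ≤ C * (Real.exp n / (n + 1)) * (1 / Real.exp n) := by
              gcongr; exact h n
          _ = C / (n + 1) := by
              field_simp
      rw [harmonic_succ]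
      push_cast
      rw [mul_add, ← div_eq_mul_inv]
      linarith
  refine ⟨C, hC, fun n => (key n).trans ?_⟩
  gcongr
  refine (harmonic_le_one_add_log n).trans ?_
  rcases Nat.eq_zero_or_pos n with h0 | h0
  · subst h0; simp
  · have : (0:ℝ) < n := by exact_mod_cast h0
    gcongr; linarith

end BeurlingPrimes

/-! ### Generalized integers as a free monoid, and smooth ones -/

/-- The logarithm `∑ f j * log (p j)` of the generalized integer `∏ p j ^ f j`. A finitely supported
`f : ℕ →₀ ℕ` stands for a formal product of generalized primes, so that a real number occurs once
for each of its factorizations. -/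
noncomputable def lam (p : ℕ → ℝ) (f : ℕ →₀ ℕ) : ℝ := f.sum fun j k => (k : ℝ) * Real.log (p j)

/-- The weight `(∏ p j ^ f j) ^ (-s)`, with values in `ENNReal` so that sums over all `f` can be
rearranged freely. -/
noncomputable def wt (p : ℕ → ℝ) (s : ℝ) (f : ℕ →₀ ℕ) : ENNReal :=
  ENNReal.ofReal (Real.exp (-s * lam p f))

lemma lam_add (p : ℕ → ℝ) (f g : ℕ →₀ ℕ) : lam p (f + g) = lam p f + lam p g := by
  unfold lam
  rw [Finsupp.sum_add_index']
  · simp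
  · intros; push_cast; ring

lemma lam_single (p : ℕ → ℝ) (j k : ℕ) : lam p (Finsupp.single j k) = k * Real.log (p j) := by
  simp [lam]

lemma wt_add (p : ℕ → ℝ) (s : ℝ) (f g : ℕ →₀ ℕ) : wt p s (f + g) = wt p s f * wt p s g := by
  unfold wt
  rw [lam_add, mul_add, Real.exp_add, ENNReal.ofReal_mul (Real.exp_pos _).le]

namespace BeurlingPrimes

variable {p : ℕ → ℝ} {α : ℝ}

lemma log_pos (H : BeurlingPrimes p α) (j : ℕ) : 0 < Real.log (p j) := Real.log_pos (H.one_lt j)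

lemma p_pos (H : BeurlingPrimes p α) (j : ℕ) : 0 < p j := by linarith [H.one_lt j]

lemma lam_nonneg (H : BeurlingPrimes p α) (f : ℕ →₀ ℕ) : 0 ≤ lam p f :=
  Finset.sum_nonneg fun j _ => mul_nonneg (Nat.cast_nonneg _) (H.log_pos j).le

lemma le_lam (H : BeurlingPrimes p α) {f : ℕ →₀ ℕ} {j : ℕ} (hj : j ∈ f.support) :
    Real.log (p j) ≤ lam p f := by
  have h1 : (f j : ℝ) * Real.log (p j) ≤ lam p f :=
    Finset.single_le_sum (f := fun j => (f j : ℝ) * Real.log (p j))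
      (fun i _ => mul_nonneg (Nat.cast_nonneg _) (H.log_pos i).le) hj
  have h2 : (1:ℝ) ≤ f j := by
    have := Finsupp.mem_support_iff.1 hj
    exact_mod_cast Nat.one_le_iff_ne_zero.2 this
  nlinarith [H.log_pos j]

lemma support_subset (H : BeurlingPrimes p α) {f : ℕ →₀ ℕ} {x : ℝ} (hf : lam p f ≤ x) :
    f.support ⊆ primesLE p (Real.exp x) := by
  intro j hj
  rw [H.mem_primesLE, ← Real.log_le_iff_le_exp (H.p_pos j)]
  exact (H.le_lam hj).trans hf

lemma rpow_lt_one (H : BeurlingPrimes p α) {σ : ℝ} (hσ : 0 < σ) (j : ℕ) : p j ^ (-σ) < 1 :=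
  Real.rpow_lt_one_of_one_lt_of_neg (H.one_lt j) (by linarith)

lemma tsum_wt_single (H : BeurlingPrimes p α) {σ : ℝ} (hσ : 0 < σ) (j : ℕ) :
    ∑' k : ℕ, wt p σ (Finsupp.single j k) = ENNReal.ofReal ((1 - p j ^ (-σ))⁻¹) := by
  have h0 : 0 ≤ p j ^ (-σ) := Real.rpow_nonneg (H.p_pos j).le _
  have h1 := H.rpow_lt_one hσ j
  rw [← tsum_geometric_of_lt_one h0 h1,
    ENNReal.ofReal_tsum_of_nonneg (fun n => by positivity) (summable_geometric_of_lt_one h0 h1)]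
  refine tsum_congr fun k => ?_
  rw [wt, lam_single, Real.rpow_def_of_pos (H.p_pos j), ← Real.exp_nat_mul]
  congr 2; ring

/-- The Euler product over finitely many generalized primes. -/
lemma euler_finite (H : BeurlingPrimes p α) {σ : ℝ} (hσ : 0 < σ) (J : Finset ℕ) :
    ∑' f : {f : ℕ →₀ ℕ // f.support ⊆ J}, wt p σ f
      = ENNReal.ofReal (∏ j ∈ J, (1 - p j ^ (-σ))⁻¹) := by
  classical
  induction J using Finset.induction_on with
  | empty =>
    have : Unique {f : ℕ →₀ ℕ // f.support ⊆ (∅ : Finset ℕ)} :=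
      { default := ⟨0, by simp⟩
        uniq := fun f => Subtype.ext (by simpa using f.2) }
    rw [tsum_fintype]
    simp only [Finset.univ_unique, Finset.sum_singleton, Finset.prod_empty]
    have h0 : ((default : {f : ℕ →₀ ℕ // f.support ⊆ (∅ : Finset ℕ)}) : ℕ →₀ ℕ) = 0 := by
      simpa using (default : {f : ℕ →₀ ℕ // f.support ⊆ (∅ : Finset ℕ)}).2
    rw [h0]
    simp [wt, lam]
  | insert j J hj ih =>
    rw [Finset.prod_insert hj, ENNReal.ofReal_mul
      (inv_nonneg.2 (by linarith [H.rpow_lt_one hσ j])), ← ih, ← H.tsum_wt_single hσ j,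
      ← ENNReal.tsum_mul_right]
    simp_rw [← ENNReal.tsum_mul_left]
    rw [← ENNReal.tsum_prod (f := fun (k : ℕ) (f : {f : ℕ →₀ ℕ // f.support ⊆ J}) =>
      wt p σ (Finsupp.single j k) * wt p σ f)]
    let e : ℕ × {f : ℕ →₀ ℕ // f.support ⊆ J} ≃ {f : ℕ →₀ ℕ // f.support ⊆ insert j J} :=
      { toFun := fun x => ⟨Finsupp.single j x.1 + x.2.1, by
          refine Finsupp.support_add.trans (Finset.union_subset ?_ ?_)
          · exact Finsupp.support_single_subset.trans (by simp)
          · exact x.2.2.trans (Finset.subset_insert _ _)⟩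
        invFun := fun f => ⟨f.1 j, ⟨f.1.erase j, by
          rw [Finsupp.support_erase]
          intro i hi
          have h1 := Finset.mem_of_mem_erase hi
          have h2 := Finset.ne_of_mem_erase hi
          exact (Finset.mem_insert.1 (f.2 h1)).resolve_left h2⟩⟩
        left_inv := fun x => by
          obtain ⟨k, f, hf⟩ := x
          have h0 : f j = 0 := by
            by_contra h
            exact hj (hf (Finsupp.mem_support_iff.2 h))
          ext i
          · simp [h0]
          · by_cases hi : i = j
            · subst hi; simp [h0]
            · simp [Finsupp.erase_ne hi]
        right_inv := fun f => by
          apply Subtype.ext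
          exact Finsupp.single_add_erase j f.1 }
    rw [← e.tsum_eq]
    refine tsum_congr fun x => ?_
    exact wt_add _ _ _ _

/-- Sums over `exp n`-smooth generalized integers grow at most polynomially in `n`, even for
exponents `1 - 1 / n` slightly to the left of `1`. -/
lemma smooth_sum (H : BeurlingPrimes p α) : ∃ (C : ℕ) (K : ℝ), 0 < K ∧ ∀ n : ℕ, 2 ≤ n → ∀ σ : ℝ,
    1 - 1 / (n : ℝ) ≤ σ → σ ≤ 1 →
    ∑' f : {f : ℕ →₀ ℕ // f.support ⊆ primesLE p (Real.exp n)}, wt p σ f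
      ≤ ENNReal.ofReal (K * ((n : ℝ) + 1) ^ C) := by
  obtain ⟨C1, hC1, h1⟩ := H.sum_inv_le
  set x0 : ℝ := p 0 ^ (-(1/2) : ℝ) with hx0
  have hx01 : x0 < 1 := H.rpow_lt_one (by norm_num) 0
  set c : ℝ := (1 - x0)⁻¹ with hc
  have hcpos : 0 < c := inv_pos.2 (by linarith)
  set D : ℝ := c * (Real.exp 1 * C1) with hD
  have hDpos : 0 < D := by positivity
  refine ⟨⌈D⌉₊, Real.exp D, Real.exp_pos _, fun n hn σ hσ hσ1 => ?_⟩
  have hn2 : (2:ℝ) ≤ n := by exact_mod_cast hn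
  have hninv : 1 / (n:ℝ) ≤ 1 / 2 := one_div_le_one_div_of_le (by norm_num) hn2
  have hσ2 : 1 / 2 ≤ σ := by linarith
  rw [H.euler_finite (by linarith)]
  apply ENNReal.ofReal_le_ofReal
  have step : ∀ j ∈ primesLE p (Real.exp n), (1 - p j ^ (-σ))⁻¹
      ≤ Real.exp (c * (Real.exp 1 * (1 / p j))) := by
    intro j hj
    rw [H.mem_primesLE] at hj
    have a0 : 0 ≤ p j ^ (-σ) := Real.rpow_nonneg (H.p_pos j).le _
    have a1 : p j ^ (-σ) ≤ x0 := by
      calc p j ^ (-σ) ≤ p j ^ (-(1/2) : ℝ) :=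
            Real.rpow_le_rpow_of_exponent_le (H.one_lt j).le (by linarith)
        _ ≤ p 0 ^ (-(1/2) : ℝ) :=
            Real.rpow_le_rpow_of_nonpos (H.p_pos 0) (H.mono (Nat.zero_le _)) (by norm_num)
    have a2 : p j ^ (-σ) ≤ Real.exp 1 * (1 / p j) := by
      rw [Real.rpow_def_of_pos (H.p_pos j)]
      have b1 : Real.log (p j) ≤ n := (Real.log_le_iff_le_exp (H.p_pos j)).2 hj
      have b2 : 1 / p j = Real.exp (-Real.log (p j)) := by
        rw [Real.exp_neg, Real.exp_log (H.p_pos j), one_div]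
      rw [b2, ← Real.exp_add, Real.exp_le_exp]
      have b3 : (1 - σ) * Real.log (p j) ≤ 1 / (n:ℝ) * n :=
        mul_le_mul (by linarith) b1 (H.log_pos j).le (by positivity)
      rw [one_div, inv_mul_cancel₀ (by positivity)] at b3
      linarith
    have a3 : (1 - p j ^ (-σ))⁻¹ ≤ c * p j ^ (-σ) + 1 := by
      rw [inv_le_iff_one_le_mul₀ (by linarith)]
      have e1 : 1 ≤ c * (1 - p j ^ (-σ)) := by
        rw [hc, ← div_eq_inv_mul, le_div_iff₀ (by linarith)]; linarith
      nlinarith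
    refine a3.trans ((Real.add_one_le_exp _).trans ?_)
    apply Real.exp_le_exp.2
    gcongr
  calc ∏ j ∈ primesLE p (Real.exp n), (1 - p j ^ (-σ))⁻¹
      ≤ ∏ j ∈ primesLE p (Real.exp n), Real.exp (c * (Real.exp 1 * (1 / p j))) := by
        apply Finset.prod_le_prod _ step
        intro j _
        exact inv_nonneg.2 (by linarith [H.rpow_lt_one (show 0 < σ by linarith) j])
    _ = Real.exp (c * (Real.exp 1 * ∑ j ∈ primesLE p (Real.exp n), 1 / p j)) := by
        rw [← Real.exp_sum, Finset.mul_sum, Finset.mul_sum]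
    _ ≤ Real.exp (c * (Real.exp 1 * (C1 * (1 + Real.log (n + 1))))) := by
        gcongr; exact h1 n
    _ = Real.exp D * ((n:ℝ) + 1) ^ D := by
        rw [Real.rpow_def_of_pos (by positivity), ← Real.exp_add]
        congr 1; rw [hD]; ring
    _ ≤ Real.exp D * ((n:ℝ) + 1) ^ ⌈D⌉₊ := by
        gcongr
        rw [← Real.rpow_natCast]
        exact Real.rpow_le_rpow_of_exponent_le (by linarith) (Nat.le_ceil D)

/-- A generalized integer of logarithm at most `x` only involves primes up to `exp x`, so that the
bound for smooth numbers bounds the logarithmic sum over all of them. -/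
lemma sum_le_of_smooth (H : BeurlingPrimes p α) {C : ℕ} {K : ℝ} (hK : 0 < K)
    (h : ∀ n : ℕ, 2 ≤ n → ∀ σ : ℝ, 1 - 1 / (n : ℝ) ≤ σ → σ ≤ 1 →
    ∑' f : {f : ℕ →₀ ℕ // f.support ⊆ primesLE p (Real.exp n)}, wt p σ f
      ≤ ENNReal.ofReal (K * ((n : ℝ) + 1) ^ C)) {x : ℝ} (hx : 0 ≤ x) :
    ∑' f : ℕ →₀ ℕ, (if lam p f ≤ x then wt p 1 f else 0)
      ≤ ENNReal.ofReal (K * 2 ^ C * (x + 2) ^ C) := by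
  classical
  set n : ℕ := ⌈x⌉₊ + 2 with hn
  have hxn : x ≤ n := by
    rw [hn]; push_cast; linarith [Nat.le_ceil x]
  have hnx : (n:ℝ) ≤ x + 3 := by
    rw [hn]; push_cast; linarith [Nat.ceil_lt_add_one hx]
  have h1 := h n (by omega) 1 (by simp) le_rfl
  calc _ ≤ ∑' f : ℕ →₀ ℕ, ({f : ℕ →₀ ℕ | f.support ⊆ primesLE p (Real.exp n)}).indicator
          (wt p 1) f := by
        refine ENNReal.tsum_le_tsum fun f => ?_
        split_ifs with hf
        · rw [Set.indicator_of_mem]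
          exact H.support_subset (hf.trans hxn)
        · exact zero_le
    _ = ∑' f : {f : ℕ →₀ ℕ // f.support ⊆ primesLE p (Real.exp n)}, wt p 1 f :=
        (tsum_subtype {f : ℕ →₀ ℕ | f.support ⊆ primesLE p (Real.exp n)} (wt p 1)).symm
    _ ≤ _ := h1
    _ ≤ _ := by
        apply ENNReal.ofReal_le_ofReal
        rw [mul_assoc, ← mul_pow]
        gcongr
        linarith

end BeurlingPrimes

/-! ### Generalized integers in short intervals -/

namespace BeurlingPrimes

variable {p : ℕ → ℝ} {α : ℝ}

lemma tsum_count (H : BeurlingPrimes p α) {a b : ℝ} (hab : a ≤ b) :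
    ∑' j, (if a < p j ∧ p j ≤ b then (1:ENNReal) else 0)
      = ENNReal.ofReal (((primesLE p b).card : ℝ) - (primesLE p a).card) := by
  rw [tsum_eq_sum (s := primesLE p b \ primesLE p a)]
  · have hsub := H.primesLE_mono hab
    rw [Finset.sum_congr rfl (g := fun _ => (1:ENNReal))]
    · rw [← Nat.cast_sub (Finset.card_le_card hsub), ← Finset.card_sdiff_of_subset hsub,
        ENNReal.ofReal_natCast]
      simp
    · intro j hj
      rw [Finset.mem_sdiff, H.mem_primesLE, H.mem_primesLE, not_le] at hj
      simp [hj.1, hj.2]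
  · intro j hj
    rw [Finset.mem_sdiff, H.mem_primesLE, H.mem_primesLE, not_le] at hj
    rw [if_neg]
    exact fun h => hj h.symm

/-- Rankin's method: among generalized integers of logarithm at most `b`, each has
`exp ((1 - 1 / r) * b)` times its weight at `1 - 1 / r` at least `1`. -/
lemma smooth_count {S : ℝ} {r : ℕ} (hr : 2 ≤ r) {b : ℝ}
    (h : ∑' f : {f : ℕ →₀ ℕ // f.support ⊆ primesLE p (Real.exp r)}, wt p (1 - 1 / (r:ℝ)) f
      ≤ ENNReal.ofReal S) :
    ∑' f : ℕ →₀ ℕ, (if f.support ⊆ primesLE p (Real.exp r) ∧ lam p f ≤ b then (1:ENNReal) else 0)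
      ≤ ENNReal.ofReal (Real.exp (b - b / r) * S) := by
  classical
  set σ : ℝ := 1 - 1 / (r:ℝ) with hσ
  have hr2 : (2:ℝ) ≤ r := by exact_mod_cast hr
  have hσ0 : 0 ≤ σ := by
    have : 1 / (r:ℝ) ≤ 1 / 2 := one_div_le_one_div_of_le (by norm_num) hr2
    linarith
  calc _ ≤ ∑' f : ℕ →₀ ℕ, ENNReal.ofReal (Real.exp (b - b / r)) *
          ({f : ℕ →₀ ℕ | f.support ⊆ primesLE p (Real.exp r)}).indicator (wt p σ) f := by
        refine ENNReal.tsum_le_tsum fun f => ?_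
        split_ifs with hf
        · rw [Set.indicator_of_mem (by exact hf.1), wt, ← ENNReal.ofReal_mul (Real.exp_pos _).le,
            ← Real.exp_add, ← ENNReal.ofReal_one]
          apply ENNReal.ofReal_le_ofReal
          apply Real.one_le_exp
          have : b - b / r = σ * b := by rw [hσ]; ring
          rw [this]
          nlinarith [hf.2]
        · exact zero_le
    _ = ENNReal.ofReal (Real.exp (b - b / r)) *
        ∑' f : {f : ℕ →₀ ℕ // f.support ⊆ primesLE p (Real.exp r)}, wt p σ f := by
        rw [ENNReal.tsum_mul_left]
        congr 1
        exact (tsum_subtype {f : ℕ →₀ ℕ | f.support ⊆ primesLE p (Real.exp r)} (wt p σ)).symm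
    _ ≤ ENNReal.ofReal (Real.exp (b - b / r)) * ENNReal.ofReal S := by gcongr
    _ = _ := (ENNReal.ofReal_mul (Real.exp_pos _).le).symm

/-- Generalized integers in a short interval having a large prime factor: remove that factor and
count the possible values for it. -/
lemma rough_count (H : BeurlingPrimes p α) {C : ℝ} (hC : 0 < C)
    (h : ∀ a b, 0 ≤ a → a ≤ b → 1 ≤ b →
      ((primesLE p b).card : ℝ) - (primesLE p a).card ≤ C * ((b - a) + b ^ α))
    {S : ℝ} {r : ℕ} {a b : ℝ} (hab : a ≤ b)
    (hS : ∑' f : ℕ →₀ ℕ, (if lam p f ≤ b then wt p 1 f else 0) ≤ ENNReal.ofReal S) :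
    ∑' f : ℕ →₀ ℕ, (if ¬ f.support ⊆ primesLE p (Real.exp r) ∧ a < lam p f ∧ lam p f ≤ b
        then (1:ENNReal) else 0)
      ≤ ENNReal.ofReal (C * (Real.exp b - Real.exp a + Real.exp b * Real.exp (-((1 - α) * r))) * S) := by
  classical
  set Q : ℝ := Real.exp b - Real.exp a + Real.exp b * Real.exp (-((1 - α) * r)) with hQ
  have hQ0 : 0 ≤ Q := by
    have := Real.exp_le_exp.2 hab
    have : 0 < Real.exp b * Real.exp (-((1 - α) * r)) := by positivity
    linarith
  -- `φ f j` detects that `p j` is a large prime factor of `f`; summing over `j` overcounts.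
  let φ : (ℕ →₀ ℕ) → ℕ → ENNReal := fun f j =>
    if f j ≠ 0 ∧ Real.exp r < p j ∧ a < lam p f ∧ lam p f ≤ b then 1 else 0
  have step1 : ∀ f : ℕ →₀ ℕ, (if ¬ f.support ⊆ primesLE p (Real.exp r) ∧ a < lam p f ∧ lam p f ≤ b
        then (1:ENNReal) else 0) ≤ ∑' j, φ f j := by
    intro f
    split_ifs with hf
    · obtain ⟨j, hj, hjn⟩ := Finset.not_subset.1 hf.1
      rw [H.mem_primesLE, not_le] at hjn
      refine le_trans ?_ (ENNReal.le_tsum j)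
      simp only [φ]
      rw [if_pos ⟨Finsupp.mem_support_iff.1 hj, hjn, hf.2⟩]
    · exact zero_le
  have step2 : ∀ j, ∑' f, φ f j = ∑' g : ℕ →₀ ℕ, φ (g + Finsupp.single j 1) j := by
    intro j
    symm
    refine Function.Injective.tsum_eq (g := fun g : ℕ →₀ ℕ => g + Finsupp.single j 1)
      (f := fun f => φ f j) (add_left_injective _) ?_
    intro f hf
    have hf0 : f j ≠ 0 := by
      by_contra hc
      apply hf
      simp [φ, hc]
    refine ⟨f - Finsupp.single j 1, ?_⟩
    exact tsub_add_cancel_of_le (Finsupp.single_le_iff.2 (Nat.one_le_iff_ne_zero.2 hf0))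
  have step3 : ∀ g : ℕ →₀ ℕ, ∑' j, φ (g + Finsupp.single j 1) j
      ≤ ENNReal.ofReal (C * Q) * (if lam p g ≤ b then wt p 1 g else 0) := by
    intro g
    have hlog : ∀ j, lam p (g + Finsupp.single j 1) = lam p g + Real.log (p j) := by
      intro j; rw [lam_add, lam_single]; simp
    by_cases hb : r < b - lam p g
    · have hb0 : lam p g ≤ b := by
        have : (0:ℝ) ≤ r := Nat.cast_nonneg _
        linarith
      rw [if_pos hb0]
      calc _ ≤ ∑' j, (if Real.exp (a - lam p g) < p j ∧ p j ≤ Real.exp (b - lam p g)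
              then (1:ENNReal) else 0) := by
            refine ENNReal.tsum_le_tsum fun j => ?_
            simp only [φ]
            split_ifs with h1 h2 h2
            · exact le_rfl
            · exfalso
              apply h2
              rw [hlog] at h1
              constructor
              · rw [← Real.lt_log_iff_exp_lt (H.p_pos j)]; linarith [h1.2.2.1]
              · rw [← Real.log_le_iff_le_exp (H.p_pos j)]; linarith [h1.2.2.2]
            · exact zero_le
            · exact zero_le
        _ = _ := H.tsum_count (Real.exp_le_exp.2 (by linarith))
        _ ≤ ENNReal.ofReal (C * Q * Real.exp (-1 * lam p g)) := by
            apply ENNReal.ofReal_le_ofReal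
            refine (h _ _ (Real.exp_pos _).le (Real.exp_le_exp.2 (by linarith))
              (Real.one_le_exp (by linarith))).trans ?_
            rw [mul_assoc]
            gcongr
            have e1 : Real.exp (b - lam p g) ^ α
                ≤ Real.exp b * Real.exp (-((1 - α) * r)) * Real.exp (-1 * lam p g) := by
              rw [← Real.exp_mul, ← Real.exp_add, ← Real.exp_add, Real.exp_le_exp]
              have := H.lt_one
              nlinarith
            have e2 : Real.exp (b - lam p g) = Real.exp b * Real.exp (-1 * lam p g) := by
              rw [← Real.exp_add]; congr 1; ring
            have e3 : Real.exp (a - lam p g) = Real.exp a * Real.exp (-1 * lam p g) := by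
              rw [← Real.exp_add]; congr 1; ring
            rw [hQ]
            linarith
        _ = _ := by
            rw [ENNReal.ofReal_mul (by positivity)]; rfl
    · have : ∀ j, φ (g + Finsupp.single j 1) j = 0 := by
        intro j
        simp only [φ]
        rw [if_neg]
        rintro ⟨-, h2, -, h4⟩
        rw [hlog] at h4
        rw [← Real.lt_log_iff_exp_lt (H.p_pos j)] at h2
        linarith
      simp [this]
  calc _ ≤ ∑' f, ∑' j, φ f j := ENNReal.tsum_le_tsum step1
    _ = ∑' j, ∑' f, φ f j := ENNReal.tsum_comm
    _ = ∑' j, ∑' g : ℕ →₀ ℕ, φ (g + Finsupp.single j 1) j := tsum_congr step2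
    _ = ∑' g : ℕ →₀ ℕ, ∑' j, φ (g + Finsupp.single j 1) j := ENNReal.tsum_comm
    _ ≤ ∑' g : ℕ →₀ ℕ, ENNReal.ofReal (C * Q) * (if lam p g ≤ b then wt p 1 g else 0) :=
        ENNReal.tsum_le_tsum step3
    _ = ENNReal.ofReal (C * Q) * ∑' g : ℕ →₀ ℕ, (if lam p g ≤ b then wt p 1 g else 0) :=
        ENNReal.tsum_mul_left
    _ ≤ ENNReal.ofReal (C * Q) * ENNReal.ofReal S := by gcongr
    _ = _ := (ENNReal.ofReal_mul (by positivity)).symm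

lemma exp_neg_mul_le {β : ℝ} (hβ : 0 < β) {n : ℕ} {x : ℝ} (hx : 0 < x) :
    Real.exp (-(β * x)) ≤ n.factorial / β ^ n * (x ^ n)⁻¹ := by
  have h1 := Real.pow_div_factorial_le_exp (x := β * x) (by positivity) n
  rw [Real.exp_neg, inv_le_comm₀ (Real.exp_pos _) (by positivity)]
  refine le_trans (le_of_eq ?_) h1
  rw [mul_pow]
  field_simp

set_option maxHeartbeats 1000000 in
/-- Weighted count of generalized integers in a short multiplicative interval: up to a fixed power of
the logarithm it is the length of the interval plus an arbitrary negative power of the logarithm. -/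
lemma short_sum (H : BeurlingPrimes p α) : ∃ C : ℕ,
    (∃ K : ℝ, 0 < K ∧ ∀ x : ℝ, 0 ≤ x → ∑' f : ℕ →₀ ℕ, (if lam p f ≤ x then wt p 1 f else 0)
      ≤ ENNReal.ofReal (K * (x + 2) ^ C)) ∧
    ∀ M : ℕ, ∃ K : ℝ, 0 < K ∧ ∀ l h : ℝ, 0 ≤ l → 0 < h →
    ∑' f : ℕ →₀ ℕ, (if |lam p f - l| ≤ h then wt p 1 f else 0)
      ≤ ENNReal.ofReal (K * (l + h + 2) ^ C * (h + ((l + 2) ^ M)⁻¹)) := by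
  classical
  obtain ⟨C, K0, hK0, hsm⟩ := H.smooth_sum
  obtain ⟨C1, hC1, hsh⟩ := H.count_short
  have hS : ∀ x : ℝ, 0 ≤ x → _ := fun x hx => H.sum_le_of_smooth hK0 hsm hx
  set K1 : ℝ := K0 * 2 ^ C with hK1
  have hK1pos : 0 < K1 := by positivity
  refine ⟨C, ⟨K1, hK1pos, hS⟩, fun M => ?_⟩
  have hβ : 0 < 1 - α := by linarith [H.lt_one]
  have hβ1 : 1 - α < 1 := by linarith [H.pos]
  have trivial_bound : ∀ l h : ℝ, 0 ≤ l → 0 < h →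
      ∑' f : ℕ →₀ ℕ, (if |lam p f - l| ≤ h then wt p 1 f else 0)
        ≤ ENNReal.ofReal (K1 * (l + h + 2) ^ C) := by
    intro l h hl hh
    refine le_trans (ENNReal.tsum_le_tsum fun f => ?_) (hS (l + h) (by positivity))
    split_ifs with h1 h2 h2
    · exact le_rfl
    · exact absurd (by linarith [(abs_le.1 h1).2]) h2
    · exact zero_le
    · exact zero_le
  set A : ℝ := (2 * M).factorial / (1 - α) ^ (2 * M) * 3 ^ M * Real.exp 1 with hA
  have hApos : 0 < A := by positivity
  set B : ℝ := C1 * K1 * 17 + 8 * K0 with hB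
  have hBpos : 0 < B := by positivity
  refine ⟨K1 + K1 * 18 ^ M + B * 1 + B * A, by positivity, fun l h hl hh => ?_⟩
  set R : ℝ := (l + h + 2) ^ C with hR
  have hRpos : 0 < R := by positivity
  set I : ℝ := ((l + 2) ^ M)⁻¹ with hI
  have hIpos : 0 < I := by positivity
  rcases le_total 1 h with hh1 | hh1
  · refine (trivial_bound l h hl hh).trans (ENNReal.ofReal_le_ofReal ?_)
    have e1 : K1 * R * 1 ≤ K1 * R * (h + I) := by gcongr; linarith
    have e2 : 0 ≤ (K1 * 18 ^ M + B * 1 + B * A) * R * (h + I) := by positivity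
    linarith
  rcases le_total l 16 with hl16 | hl16
  · refine (trivial_bound l h hl hh).trans (ENNReal.ofReal_le_ofReal ?_)
    have e1 : 1 ≤ 18 ^ M * (h + I) := by
      have : (18 ^ M : ℝ)⁻¹ ≤ I := by
        rw [hI]; gcongr; linarith
      calc (1:ℝ) = 18 ^ M * (18 ^ M)⁻¹ := by field_simp
        _ ≤ _ := by gcongr; linarith
    have e2 : K1 * R * 1 ≤ K1 * R * (18 ^ M * (h + I)) := by gcongr
    have e3 : 0 ≤ (K1 + B * 1 + B * A) * R * (h + I) := by positivity
    linarith
  -- Numbers that are not `exp r`-smooth with `r ≈ √l` are counted by removing a large prime, smooth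
  -- ones by the shift `1 / r` of the exponent, which saves `exp (-b / r)`, that is `exp (-√l)`.
  set r : ℕ := ⌊Real.sqrt l⌋₊ with hr
  have hrle : (r:ℝ) ≤ Real.sqrt l := Nat.floor_le (Real.sqrt_nonneg _)
  have hrlt : Real.sqrt l < r + 1 := Nat.lt_floor_add_one _
  have hsq : Real.sqrt l ^ 2 = l := Real.sq_sqrt hl
  have hr4 : 4 ≤ r := by
    apply Nat.le_floor
    push_cast
    rw [Real.le_sqrt' (by norm_num)]; linarith
  have hr4' : (4:ℝ) ≤ r := by exact_mod_cast hr4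
  have hrl : (r:ℝ) ^ 2 ≤ l := by rw [← hsq]; gcongr
  have hrl1 : (r:ℝ) + 1 ≤ l + h + 2 := by nlinarith
  have hlr : l ≤ (r + 1 : ℝ) ^ 2 := by rw [← hsq]; gcongr
  set a : ℝ := l - 2 * h with ha
  set b : ℝ := l + h with hb
  have h1 := H.rough_count (r := r) hC1 hsh (a := a) (b := b) (by linarith) (hS b (by linarith))
  have h2 := smooth_count (p := p) (r := r) (by omega) (b := b) (hsm r (by omega) _ le_rfl
    (by have : 0 < 1 / (r:ℝ) := by positivity
        linarith))
  set X1 : ℝ := C1 * (Real.exp b - Real.exp a + Real.exp b * Real.exp (-((1 - α) * r)))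
    * (K1 * (b + 2) ^ C) with hX1
  set X2 : ℝ := Real.exp (b - b / r) * (K0 * ((r:ℝ) + 1) ^ C) with hX2
  have hX1pos : 0 ≤ X1 := by
    have : Real.exp a ≤ Real.exp b := Real.exp_le_exp.2 (by linarith)
    have : 0 < Real.exp b * Real.exp (-((1 - α) * r)) := by positivity
    have : 0 ≤ Real.exp b - Real.exp a + Real.exp b * Real.exp (-((1 - α) * r)) := by linarith
    have : 0 ≤ b + 2 := by linarith
    positivity
  have hX2pos : 0 ≤ X2 := by positivity
  have tot : ∑' f : ℕ →₀ ℕ, (if |lam p f - l| ≤ h then wt p 1 f else 0)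
      ≤ ENNReal.ofReal (Real.exp (-(l - h)) * (X1 + X2)) := by
    calc _ ≤ ∑' f : ℕ →₀ ℕ, ENNReal.ofReal (Real.exp (-(l - h))) *
          ((if ¬ f.support ⊆ primesLE p (Real.exp r) ∧ a < lam p f ∧ lam p f ≤ b
            then (1:ENNReal) else 0) +
          (if f.support ⊆ primesLE p (Real.exp r) ∧ lam p f ≤ b then (1:ENNReal) else 0)) := by
          refine ENNReal.tsum_le_tsum fun f => ?_
          by_cases hf : |lam p f - l| ≤ h
          · obtain ⟨f1, f2⟩ := abs_le.1 hf
            rw [if_pos hf]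
            have e1 : wt p 1 f ≤ ENNReal.ofReal (Real.exp (-(l - h))) * 1 := by
              rw [mul_one, wt]
              apply ENNReal.ofReal_le_ofReal
              apply Real.exp_le_exp.2
              linarith
            refine e1.trans ?_
            gcongr
            by_cases hs : f.support ⊆ primesLE p (Real.exp r)
            · rw [if_neg (by tauto), if_pos ⟨hs, by linarith⟩]; simp
            · rw [if_pos ⟨hs, by linarith, by linarith⟩]; simp
          · rw [if_neg hf]; exact zero_le
      _ ≤ ENNReal.ofReal (Real.exp (-(l - h))) * (ENNReal.ofReal X1 + ENNReal.ofReal X2) := by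
          rw [ENNReal.tsum_mul_left, ENNReal.tsum_add]
          gcongr
      _ = _ := by
          rw [← ENNReal.ofReal_add hX1pos hX2pos, ← ENNReal.ofReal_mul (Real.exp_pos _).le]
  refine tot.trans (ENNReal.ofReal_le_ofReal ?_)
  set ε : ℝ := Real.exp (-((1 - α) * r)) with hε
  have hεpos : 0 < ε := Real.exp_pos _
  have he2 : Real.exp (2 * h) ≤ 8 := by
    calc Real.exp (2 * h) ≤ Real.exp (1 + 1) := Real.exp_le_exp.2 (by linarith)
      _ = Real.exp 1 * Real.exp 1 := Real.exp_add _ _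
      _ ≤ 8 := by nlinarith [Real.exp_one_lt_d9, Real.exp_pos 1]
  have g1 : Real.exp (-(l - h)) * (Real.exp b - Real.exp a) ≤ 17 * h := by
    have e1 : Real.exp (-(l - h)) * (Real.exp b - Real.exp a) = Real.exp (2 * h) - Real.exp (-h) := by
      rw [mul_sub, ← Real.exp_add, ← Real.exp_add]
      congr 2 <;> simp only [ha, hb] <;> ring
    have e2 : 1 - h ≤ Real.exp (-h) := Real.one_sub_le_exp_neg h
    have e3 : Real.exp (2 * h) * (1 - 2 * h) ≤ 1 := by
      have := Real.one_sub_le_exp_neg (2 * h)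
      calc Real.exp (2 * h) * (1 - 2 * h) ≤ Real.exp (2 * h) * Real.exp (-(2 * h)) := by gcongr
        _ = 1 := by rw [← Real.exp_add]; simp
    rw [e1]
    nlinarith
  have g2 : Real.exp (-(l - h)) * Real.exp b ≤ 8 := by
    rw [← Real.exp_add]
    have : -(l - h) + b = 2 * h := by rw [hb]; ring
    rw [this]; exact he2
  have g3 : Real.exp (-(l - h)) * X1 ≤ C1 * K1 * R * (17 * h + 8 * ε) := by
    have : Real.exp (-(l - h)) * X1 = C1 * K1 * R * (Real.exp (-(l - h)) * (Real.exp b - Real.exp a)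
        + Real.exp (-(l - h)) * Real.exp b * ε) := by
      rw [hX1]; ring
    rw [this]
    gcongr
  have g4 : Real.exp (-(l - h)) * X2 ≤ 8 * K0 * R * ε := by
    have e1 : Real.exp (-(l - h)) * Real.exp (b - b / r) ≤ 8 * ε := by
      have : Real.exp (-(l - h)) * Real.exp (b - b / r)
          = Real.exp (-(l - h)) * Real.exp b * Real.exp (-(b / r)) := by
        rw [mul_assoc, ← Real.exp_add, ← Real.exp_add, ← Real.exp_add]
        congr 1
      rw [this]
      have e2 : Real.exp (-(b / r)) ≤ ε := by
        apply Real.exp_le_exp.2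
        have : (1 - α) * r ≤ b / r := by
          rw [le_div_iff₀ (by positivity)]
          have q1 : (1 - α) * ((r:ℝ) * r) ≤ 1 * ((r:ℝ) * r) := by gcongr
          linarith
        linarith
      gcongr
    have e3 : ((r:ℝ) + 1) ^ C ≤ R := by rw [hR]; gcongr
    calc Real.exp (-(l - h)) * X2 = (Real.exp (-(l - h)) * Real.exp (b - b / r)) * (K0 * ((r:ℝ) + 1) ^ C) := by
          rw [hX2]; ring
      _ ≤ (8 * ε) * (K0 * R) := by gcongr
      _ = _ := by ring
  have g5 : ε ≤ A * I := by
    have e1 := exp_neg_mul_le hβ (n := 2 * M) (x := (r:ℝ) + 1) (by positivity)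
    have e2 : ε ≤ Real.exp 1 * Real.exp (-((1 - α) * (r + 1))) := by
      rw [← Real.exp_add]
      apply Real.exp_le_exp.2
      linarith
    have e3 : (((r:ℝ) + 1) ^ (2 * M))⁻¹ ≤ 3 ^ M * I := by
      rw [hI, inv_le_comm₀ (by positivity) (by positivity), mul_inv, inv_inv, pow_mul, ← inv_pow,
        ← mul_pow]
      gcongr
      nlinarith
    calc ε ≤ Real.exp 1 * ((2 * M).factorial / (1 - α) ^ (2 * M) * (((r:ℝ) + 1) ^ (2 * M))⁻¹) := by
          refine e2.trans ?_
          gcongr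
      _ ≤ Real.exp 1 * ((2 * M).factorial / (1 - α) ^ (2 * M) * (3 ^ M * I)) := by gcongr
      _ = A * I := by rw [hA]; ring
  have g6 : Real.exp (-(l - h)) * (X1 + X2) ≤ B * R * (h + ε) := by
    have : 0 ≤ C1 * K1 * R * (9 * ε) := by positivity
    have : 0 ≤ 8 * K0 * R * h := by positivity
    rw [hB]
    linarith
  have g7 : B * R * (h + ε) ≤ B * R * (h + A * I) := by gcongr
  have g8 : 0 ≤ (K1 + K1 * 18 ^ M) * R * (h + I) := by positivity
  have g9 : 0 ≤ B * R * I := by positivity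
  have g10 : 0 ≤ B * A * R * h := by positivity
  linarith

/-- The series `∑ wt p 1 f` converges once a large power of the logarithm is divided out: split according
to the integer part of `lam p f` and use the polynomial bound of `short_sum`. -/
lemma summable_wt (H : BeurlingPrimes p α) : ∃ M : ℕ,
    ∑' f : ℕ →₀ ℕ, wt p 1 f * ENNReal.ofReal (((lam p f + 2) ^ M)⁻¹) ≠ ⊤ := by
  classical
  obtain ⟨C, ⟨K, hK, hS⟩, -⟩ := H.short_sum
  refine ⟨C + 2, ne_top_of_le_ne_top (b := ∑' n : ℕ, ENNReal.ofReal (K * 2 ^ C * (1 / ((n:ℝ) + 1) ^ 2)))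
    ?_ ?_⟩
  · have hsum : Summable fun n : ℕ => K * 2 ^ C * (1 / ((n:ℝ) + 1) ^ 2) := by
      apply Summable.mul_left
      have := (summable_nat_add_iff 1).2 (Real.summable_one_div_nat_pow.2 (by norm_num : 1 < 2))
      simpa using this
    rw [← ENNReal.ofReal_tsum_of_nonneg (fun n => by positivity) hsum]
    exact ENNReal.ofReal_ne_top
  · calc _ ≤ ∑' f : ℕ →₀ ℕ, ∑' n : ℕ, (if lam p f ≤ n + 1 then wt p 1 f else 0)
          * ENNReal.ofReal ((((n:ℝ) + 2) ^ (C + 2))⁻¹) := by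
          refine ENNReal.tsum_le_tsum fun f => ?_
          refine le_trans ?_ (ENNReal.le_tsum ⌊lam p f⌋₊)
          have h1 := Nat.floor_le (H.lam_nonneg f)
          have h2 := Nat.lt_floor_add_one (lam p f)
          rw [if_pos h2.le]
          gcongr
      _ = ∑' n : ℕ, ∑' f : ℕ →₀ ℕ, (if lam p f ≤ n + 1 then wt p 1 f else 0)
          * ENNReal.ofReal ((((n:ℝ) + 2) ^ (C + 2))⁻¹) := ENNReal.tsum_comm
      _ ≤ _ := by
          refine ENNReal.tsum_le_tsum fun n => ?_
          rw [ENNReal.tsum_mul_right]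
          refine (mul_le_mul_left (hS (n + 1) (by positivity)) _).trans ?_
          rw [← ENNReal.ofReal_mul (by positivity)]
          apply ENNReal.ofReal_le_ofReal
          have e1 : ((n:ℝ) + 1 + 2) ^ C ≤ 2 ^ C * ((n:ℝ) + 2) ^ C := by
            rw [← mul_pow]; gcongr; linarith
          calc K * ((n:ℝ) + 1 + 2) ^ C * (((n:ℝ) + 2) ^ (C + 2))⁻¹
              ≤ K * (2 ^ C * ((n:ℝ) + 2) ^ C) * (((n:ℝ) + 2) ^ (C + 2))⁻¹ := by gcongr
            _ = K * 2 ^ C * (1 / ((n:ℝ) + 2) ^ 2) := by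
                rw [pow_add]; field_simp
            _ ≤ _ := by gcongr; linarith

end BeurlingPrimes

/-! ### Uniqueness of Dirichlet series with nonnegative coefficients -/

section moments
open MeasureTheory

/-- The characteristic function of a finite measure on `[0, 1]` is the exponential generating series
of its moments. -/
lemma charFun_eq_moments (ρ : Measure ℝ) [IsFiniteMeasure ρ] (h : ∀ᵐ x ∂ρ, x ∈ Set.Icc (0:ℝ) 1)
    (t : ℝ) : charFun ρ t = ∑' k : ℕ, ((t * Complex.I) ^ k / k.factorial) *
      (((∫⁻ x, ENNReal.ofReal (x ^ k) ∂ρ).toReal : ℝ) : ℂ) := by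
  rw [charFun_apply_real]
  have key : HasSum (fun k : ℕ => ∫ x : ℝ, ((t * Complex.I) ^ k / k.factorial) * ((x : ℂ)) ^ k ∂ρ)
      (∫ x : ℝ, Complex.exp (t * x * Complex.I) ∂ρ) := by
    refine hasSum_integral_of_dominated_convergence
      (bound := fun k _ => |t| ^ k / k.factorial) ?_ ?_ ?_ ?_ ?_
    · intro k
      exact Continuous.aestronglyMeasurable (by fun_prop)
    · intro k
      filter_upwards [h] with x hx
      rw [norm_mul, norm_div, norm_pow, norm_pow, norm_mul, Complex.norm_I, mul_one,
        Complex.norm_real, Complex.norm_real, Complex.norm_natCast, Real.norm_eq_abs]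
      refine mul_le_of_le_one_right (by positivity) ?_
      rw [Real.norm_of_nonneg hx.1]
      exact pow_le_one₀ hx.1 hx.2
    · exact Filter.Eventually.of_forall fun x => Real.summable_pow_div_factorial _
    · exact integrable_const _
    · refine Filter.Eventually.of_forall fun x => ?_
      have := NormedSpace.expSeries_div_hasSum_exp (𝔸 := ℂ) (t * x * Complex.I)
      rw [← Complex.exp_eq_exp_ℂ] at this
      have e : (fun k : ℕ => ((t * Complex.I) ^ k / k.factorial) * ((x : ℂ)) ^ k)
          = fun k : ℕ => (t * x * Complex.I : ℂ) ^ k / (k.factorial : ℂ) := by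
        ext k
        rw [show (t * x * Complex.I : ℂ) = (t * Complex.I) * x by ring, mul_pow]
        ring
      rw [e]
      exact this
  rw [← key.tsum_eq]
  refine tsum_congr fun k => ?_
  rw [integral_const_mul]
  congr 1
  have : ∫ x : ℝ, (x:ℂ) ^ k ∂ρ = ((∫ x : ℝ, x ^ k ∂ρ : ℝ) : ℂ) := by
    rw [← integral_complex_ofReal]
    exact integral_congr_ae (Filter.Eventually.of_forall fun x => by simp)
  rw [this, integral_eq_lintegral_of_nonneg_ae]
  · filter_upwards [h] with x hx
    exact pow_nonneg hx.1 _
  · exact Continuous.aestronglyMeasurable (by fun_prop)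

/-- The Hausdorff moment problem is determinate, since moments determine characteristic functions. -/
lemma ext_of_moments (ρ₁ ρ₂ : Measure ℝ) [IsFiniteMeasure ρ₁] [IsFiniteMeasure ρ₂]
    (h₁ : ∀ᵐ x ∂ρ₁, x ∈ Set.Icc (0:ℝ) 1) (h₂ : ∀ᵐ x ∂ρ₂, x ∈ Set.Icc (0:ℝ) 1)
    (h : ∀ k : ℕ, ∫⁻ x, ENNReal.ofReal (x ^ k) ∂ρ₁ = ∫⁻ x, ENNReal.ofReal (x ^ k) ∂ρ₂) :
    ρ₁ = ρ₂ := by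
  apply Measure.ext_of_charFun
  ext t
  rw [charFun_eq_moments ρ₁ h₁, charFun_eq_moments ρ₂ h₂]
  simp_rw [h]

/-- Uniqueness of general Dirichlet series with nonnegative coefficients: if `∑ c i * exp (-n * u i)`
and `∑ c' i * exp (-n * u' i)` agree for all natural `n`, then so do the weighted counting measures
of the exponents. The values at `n` are the moments of the images of these measures under
`u ↦ exp (-u)`, which live on `[0, 1]`. -/
lemma transfer_aux {ι κ : Type*} [Countable ι] [Countable κ] (c : ι → ENNReal) (c' : κ → ENNReal) (u : ι → ℝ) (u' : κ → ℝ)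
    (hu : ∀ i, 0 ≤ u i) (hu' : ∀ i, 0 ≤ u' i) (hc : ∑' i, c i ≠ ⊤)
    (h : ∀ n : ℕ, ∑' i, c i * ENNReal.ofReal (Real.exp (-(n * u i)))
      = ∑' i, c' i * ENNReal.ofReal (Real.exp (-(n * u' i)))) (F : ℝ → ENNReal) :
    ∑' i, c i * F (u i) = ∑' i, c' i * F (u' i) := by
  -- Stated twice because `ι` and `κ` may live in different universes.
  have formula : ∀ {ι : Type _} (c : ι → ENNReal) (u : ι → ℝ) (G : ℝ → ENNReal),
      ∫⁻ x, G x ∂(Measure.sum fun i => c i • Measure.dirac (Real.exp (-u i)))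
        = ∑' i, c i * G (Real.exp (-u i)) := by
    intro ι c u G
    rw [lintegral_sum_measure]
    refine tsum_congr fun i => ?_
    rw [lintegral_smul_measure, lintegral_dirac, smul_eq_mul]
  have formula' : ∀ {ι : Type _} (c : ι → ENNReal) (u : ι → ℝ) (G : ℝ → ENNReal),
      ∫⁻ x, G x ∂(Measure.sum fun i => c i • Measure.dirac (Real.exp (-u i)))
        = ∑' i, c i * G (Real.exp (-u i)) := by
    intro ι c u G
    rw [lintegral_sum_measure]
    refine tsum_congr fun i => ?_
    rw [lintegral_smul_measure, lintegral_dirac, smul_eq_mul]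
  have hc' : ∑' i, c' i ≠ ⊤ := by
    have := h 0
    simp at this
    rwa [← this]
  set ρ₁ : Measure ℝ := Measure.sum fun i => c i • Measure.dirac (Real.exp (-u i)) with hρ₁
  set ρ₂ : Measure ℝ := Measure.sum fun i => c' i • Measure.dirac (Real.exp (-u' i)) with hρ₂
  have fin₁ : IsFiniteMeasure ρ₁ := ⟨by
    rw [← lintegral_one, formula c u]; simpa using hc.lt_top⟩
  have fin₂ : IsFiniteMeasure ρ₂ := ⟨by
    rw [← lintegral_one, formula' c' u']; simpa using hc'.lt_top⟩
  have mem : ∀ x : ℝ, 0 ≤ x → Real.exp (-x) ∈ Set.Icc (0:ℝ) 1 := fun x hx =>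
    ⟨(Real.exp_pos _).le, Real.exp_le_one_iff.2 (by linarith)⟩
  have supp₁ : ∀ᵐ x ∂ρ₁, x ∈ Set.Icc (0:ℝ) 1 := by
    rw [hρ₁, Measure.ae_sum_iff]
    exact fun i => Measure.ae_smul_measure
      ((ae_dirac_iff measurableSet_Icc).2 (mem _ (hu i))) _
  have supp₂ : ∀ᵐ x ∂ρ₂, x ∈ Set.Icc (0:ℝ) 1 := by
    rw [hρ₂, Measure.ae_sum_iff]
    exact fun i => Measure.ae_smul_measure
      ((ae_dirac_iff measurableSet_Icc).2 (mem _ (hu' i))) _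
  have heq : ρ₁ = ρ₂ := by
    apply ext_of_moments ρ₁ ρ₂ supp₁ supp₂
    intro k
    rw [formula c u, formula' c' u']
    have e : ∀ x : ℝ, Real.exp (-x) ^ k = Real.exp (-(k * x)) := by
      intro x
      rw [← Real.exp_nat_mul]; congr 1; ring
    simp_rw [e]
    exact h k
  have r1 := formula c u (fun x => F (-Real.log x))
  have r2 := formula' c' u' (fun x => F (-Real.log x))
  simp only [Real.log_exp, neg_neg] at r1 r2
  rw [← r1, ← r2]
  exact congrArg (fun ρ => ∫⁻ x, F (-Real.log x) ∂ρ) heq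

end moments

namespace BeurlingPrimes

variable {p : ℕ → ℝ} {α : ℝ}

lemma wt_summable (H : BeurlingPrimes p α) {s : ℝ} (hs : 1 < s) :
    ∑' f : ℕ →₀ ℕ, wt p s f ≠ ⊤ := by
  obtain ⟨M, hM⟩ := H.summable_wt
  have hs' : 0 < s - 1 := by linarith
  set A : ℝ := Real.exp (2 * (s - 1)) * (M.factorial / (s - 1) ^ M) with hA
  have hA0 : 0 < A := by positivity
  refine ne_top_of_le_ne_top (b := ∑' f : ℕ →₀ ℕ, ENNReal.ofReal A *
    (wt p 1 f * ENNReal.ofReal (((lam p f + 2) ^ M)⁻¹))) ?_ ?_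
  · rw [ENNReal.tsum_mul_left]
    exact ENNReal.mul_ne_top ENNReal.ofReal_ne_top hM
  · refine ENNReal.tsum_le_tsum fun f => ?_
    have hl := H.lam_nonneg f
    rw [wt, wt, ← ENNReal.ofReal_mul (Real.exp_pos _).le, ← ENNReal.ofReal_mul hA0.le]
    apply ENNReal.ofReal_le_ofReal
    have h1 := exp_neg_mul_le hs' (n := M) (x := lam p f + 2) (by positivity)
    have h2 : Real.exp (-s * lam p f) = Real.exp (2 * (s - 1)) * Real.exp (-1 * lam p f) *
        Real.exp (-((s - 1) * (lam p f + 2))) := by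
      rw [← Real.exp_add, ← Real.exp_add]; congr 1; ring
    rw [h2, hA]
    calc _ ≤ Real.exp (2 * (s - 1)) * Real.exp (-1 * lam p f) *
          (M.factorial / (s - 1) ^ M * ((lam p f + 2) ^ M)⁻¹) := by gcongr
      _ = _ := by ring

lemma rpow_summable (H : BeurlingPrimes p α) {s : ℝ} (hs : 1 < s) :
    Summable fun j => p j ^ (-s) := by
  have h1 : ∑' j : ℕ, wt p s (Finsupp.single j 1) ≠ ⊤ := by
    refine ne_top_of_le_ne_top (H.wt_summable hs) ?_
    exact ENNReal.tsum_comp_le_tsum_of_injective (Finsupp.single_left_injective one_ne_zero) (wt p s)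
  have h2 := ENNReal.summable_toReal h1
  convert h2 using 2 with j
  rw [wt, lam_single, ENNReal.toReal_ofReal (Real.exp_pos _).le, Real.rpow_def_of_pos (H.p_pos j)]
  congr 1; push_cast; ring

/-- Euler product: the sum of the weights over the free monoid is the product of the local factors. -/
lemma exists_euler (H : BeurlingPrimes p α) {s : ℝ} (hs : 1 < s) : ∃ P : ℝ, 1 ≤ P ∧
    HasProd (fun j => (1 - p j ^ (-s))⁻¹) P ∧ ∑' f : ℕ →₀ ℕ, wt p s f = ENNReal.ofReal P := by
  have hs0 : 0 < s := by linarith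
  have hsum := H.rpow_summable hs
  have hm : Multipliable fun j => (1 - p j ^ (-s)) := by
    simpa [sub_eq_add_neg] using Real.multipliable_one_add_of_summable hsum.neg
  have hsum2 : Summable fun j => (1 - p j ^ (-s))⁻¹ - 1 := by
    have hx : ∀ j, p j ^ (-s) ≤ p 0 ^ (-s) := fun j =>
      Real.rpow_le_rpow_of_nonpos (H.p_pos 0) (H.mono (Nat.zero_le _)) (by linarith)
    have h0 := H.rpow_lt_one hs0 0
    refine Summable.of_nonneg_of_le (fun j => ?_) (fun j => ?_) (hsum.mul_left (1 - p 0 ^ (-s))⁻¹)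
    · have h1 := H.rpow_lt_one hs0 j
      have h2 : 0 ≤ p j ^ (-s) := Real.rpow_nonneg (H.p_pos j).le _
      rw [sub_nonneg, one_le_inv₀ (by linarith)]; linarith
    · have h1 := H.rpow_lt_one hs0 j
      have h2 : 0 ≤ p j ^ (-s) := Real.rpow_nonneg (H.p_pos j).le _
      have h3 : (1 - p j ^ (-s))⁻¹ - 1 = (1 - p j ^ (-s))⁻¹ * p j ^ (-s) := by
        field_simp [show (1 - p j ^ (-s)) ≠ 0 by linarith]
        ring
      rw [h3]
      exact mul_le_mul_of_nonneg_right (inv_anti₀ (by linarith) (by linarith [hx j])) h2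
  have hmul : Multipliable fun j => (1 - p j ^ (-s))⁻¹ := by
    have := Real.multipliable_one_add_of_summable hsum2
    simpa using this
  have hge : ∀ j, 1 ≤ (1 - p j ^ (-s))⁻¹ := fun j => by
    have h1 := H.rpow_lt_one hs0 j
    have h2 : 0 ≤ p j ^ (-s) := Real.rpow_nonneg (H.p_pos j).le _
    rw [one_le_inv₀ (by linarith)]; linarith
  have ht := hmul.hasProd.tendsto_prod_nat
  set P := ∏' j, (1 - p j ^ (-s))⁻¹ with hP
  have hmono : Monotone fun n => ∏ j ∈ Finset.range n, (1 - p j ^ (-s))⁻¹ := by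
    apply monotone_nat_of_le_succ
    intro n
    rw [Finset.prod_range_succ]
    refine le_mul_of_one_le_right (Finset.prod_nonneg fun j _ => by linarith [hge j]) (hge n)
  have hle : ∀ n, ∏ j ∈ Finset.range n, (1 - p j ^ (-s))⁻¹ ≤ P := fun n => hmono.ge_of_tendsto ht n
  refine ⟨P, by simpa using hle 0, hmul.hasProd, le_antisymm ?_ ?_⟩
  · rw [ENNReal.tsum_eq_iSup_sum]
    refine iSup_le fun F => ?_
    obtain ⟨n, hn⟩ : ∃ n, ∀ f ∈ F, f.support ⊆ Finset.range n := by
      obtain ⟨n, hn⟩ := (F.biUnion fun f => f.support).exists_nat_subset_range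
      exact ⟨n, fun f hf => (Finset.subset_biUnion_of_mem (fun f : ℕ →₀ ℕ => f.support) hf).trans hn⟩
    refine le_trans ?_ (ENNReal.ofReal_le_ofReal (hle n))
    rw [← H.euler_finite hs0]
    calc ∑ f ∈ F, wt p s f = ∑ f ∈ F, ({f : ℕ →₀ ℕ | f.support ⊆ Finset.range n}).indicator
          (wt p s) f := by
          refine Finset.sum_congr rfl fun f hf => ?_
          rw [Set.indicator_of_mem (by exact hn f hf)]
      _ ≤ ∑' f, ({f : ℕ →₀ ℕ | f.support ⊆ Finset.range n}).indicator (wt p s) f :=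
          ENNReal.sum_le_tsum F
      _ = _ := (tsum_subtype {f : ℕ →₀ ℕ | f.support ⊆ Finset.range n} (wt p s)).symm
  · refine le_of_tendsto (ENNReal.tendsto_ofReal ht) (Eventually.of_forall fun n => ?_)
    rw [← H.euler_finite hs0]
    exact ENNReal.tsum_comp_le_tsum_of_injective Subtype.val_injective (wt p s)

section series
variable {ν : ℕ → ℝ} {d : ℕ → ℕ} {Z : ℂ → ℂ}

lemma term_eq {x : ℝ} (hx : 0 < x) (n : ℕ) (s : ℂ) :
    (n : ℂ) / (x : ℂ) ^ s = n * Complex.exp (-s * Real.log x) := by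
  rw [Complex.cpow_def_of_ne_zero (by exact_mod_cast hx.ne'), div_eq_mul_inv, ← Complex.exp_neg,
    ← Complex.ofReal_log hx.le]
  congr 2; ring

/-- On the real axis the given Dirichlet series agrees with the sum over the free monoid, because
both are equal to the Euler product. -/
lemma dirichlet_real (H : BeurlingPrimes p α) (hνpos : ∀ m, 0 < ν m)
    (hZser : ∀ s : ℂ, 1 < s.re → Z s = ∑' m, (d m : ℂ) / (ν m : ℂ) ^ s)
    (hZprod : ∀ s : ℂ, 1 < s.re → Z s = ∏' j, (1 - (p j : ℂ) ^ (-s))⁻¹) {s : ℝ} (hs : 1 < s) :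
    ∑' m, (d m : ENNReal) * ENNReal.ofReal (Real.exp (-s * Real.log (ν m)))
      = ∑' f : ℕ →₀ ℕ, wt p s f := by
  obtain ⟨P, hP1, hPprod, hPsum⟩ := H.exists_euler hs
  have h1 : Z s = P := by
    rw [hZprod s (by simpa using hs)]
    have := (hPprod.map Complex.ofRealHom Complex.continuous_ofReal).tprod_eq
    rw [Complex.ofRealHom_eq_coe] at this
    rw [← this]
    refine tprod_congr fun j => ?_
    simp only [Function.comp, Complex.ofRealHom_eq_coe]
    push_cast
    rw [Complex.ofReal_cpow (H.p_pos j).le]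
    push_cast; rfl
  have h2 : (fun m => (d m : ℂ) / (ν m : ℂ) ^ (s:ℂ))
      = fun m => ((d m * Real.exp (-s * Real.log (ν m)) : ℝ) : ℂ) := by
    ext m
    rw [term_eq (hνpos m)]; push_cast; rfl
  have h3 : ∑' m, ((d m * Real.exp (-s * Real.log (ν m)) : ℝ) : ℂ) = P := by
    rw [← h1, hZser s (by simpa using hs), h2]
  rw [← Complex.ofReal_tsum, Complex.ofReal_inj] at h3
  have hsum : Summable fun m => d m * Real.exp (-s * Real.log (ν m)) := by
    by_contra hc
    rw [tsum_eq_zero_of_not_summable hc] at h3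
    linarith
  rw [hPsum, ← h3, ENNReal.ofReal_tsum_of_nonneg (fun m => by positivity) hsum]
  refine tsum_congr fun m => ?_
  rw [ENNReal.ofReal_mul (by positivity), ENNReal.ofReal_natCast]

/-- The multiplicities `d m` of the generalized integers `ν m` count factorizations: any nonnegative
function of the logarithm has the same sum over `ν`, weighted by `d`, and over the free monoid. -/
lemma transfer (H : BeurlingPrimes p α) (hν1 : ∀ m, 1 ≤ ν m)
    (hZser : ∀ s : ℂ, 1 < s.re → Z s = ∑' m, (d m : ℂ) / (ν m : ℂ) ^ s)
    (hZprod : ∀ s : ℂ, 1 < s.re → Z s = ∏' j, (1 - (p j : ℂ) ^ (-s))⁻¹) (F : ℝ → ENNReal) :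
    ∑' m, (d m : ENNReal) * F (Real.log (ν m)) = ∑' f : ℕ →₀ ℕ, F (lam p f) := by
  have hpos : ∀ m, 0 < ν m := fun m => by linarith [hν1 m]
  have key : ∀ s : ℝ, 1 < s → _ := fun s hs => H.dirichlet_real (s := s) hpos hZser hZprod hs
  have h2 := H.wt_summable (s := 2) (by norm_num)
  have hcancel : ∀ x : ℝ, ENNReal.ofReal (Real.exp (-2 * x)) * ENNReal.ofReal (Real.exp (2 * x)) = 1 := by
    intro x
    rw [← ENNReal.ofReal_mul (Real.exp_pos _).le, ← Real.exp_add]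
    simp
  have := transfer_aux (fun m => (d m : ENNReal) * ENNReal.ofReal (Real.exp (-2 * Real.log (ν m))))
    (fun f : ℕ →₀ ℕ => wt p 2 f) (fun m => Real.log (ν m)) (lam p)
    (fun m => Real.log_nonneg (hν1 m)) H.lam_nonneg
    (by rw [key 2 (by norm_num)]; exact h2)
    (fun n => by
      have e1 : ∀ x : ℝ, ENNReal.ofReal (Real.exp (-2 * x)) * ENNReal.ofReal (Real.exp (-(n * x)))
          = ENNReal.ofReal (Real.exp (-(2 + n) * x)) := by
        intro x
        rw [← ENNReal.ofReal_mul (Real.exp_pos _).le, ← Real.exp_add]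
        congr 2; ring
      have := key (2 + n) (by have : (0:ℝ) ≤ n := Nat.cast_nonneg n
                              linarith)
      simp only [wt, mul_assoc] at this ⊢
      simp_rw [e1]
      exact this)
    (fun x => ENNReal.ofReal (Real.exp (2 * x)) * F x)
  simp only [wt, mul_assoc] at this
  simp_rw [← mul_assoc (ENNReal.ofReal (Real.exp (-2 * _))), hcancel, one_mul] at this
  exact this

end series

end BeurlingPrimes

/-! ### Coefficient sums of the zeta function -/

/-- A Beurling zeta function `Z`: given to the right of the 1-line by the Dirichlet series
`∑ d m / ν m ^ s` and by the Euler product over a system of generalized primes, and continuous up to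
the 1-line away from `1`. -/
structure BeurlingZeta (p ν : ℕ → ℝ) (d : ℕ → ℕ) (α : ℝ) (Z : ℂ → ℂ) : Prop where
  primes : BeurlingPrimes p α
  strictMono : StrictMono ν
  one_le : ∀ m, 1 ≤ ν m
  series : ∀ s : ℂ, 1 < s.re → Z s = ∑' m, (d m : ℂ) / (ν m : ℂ) ^ s
  product : ∀ s : ℂ, 1 < s.re → Z s = ∏' j, (1 - (p j : ℂ) ^ (-s))⁻¹
  cont : ContinuousOn Z {s : ℂ | 1 ≤ s.re ∧ s ≠ 1}

/-- The coefficient `d m / ν m` of the Dirichlet series on the 1-line, written with an exponential so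
as to be compatible with `wt`; see `coef_eq`. -/
noncomputable def coef (ν : ℕ → ℝ) (d : ℕ → ℕ) (m : ℕ) : ℝ := d m * Real.exp (-Real.log (ν m))

namespace BeurlingZeta

variable {p ν : ℕ → ℝ} {d : ℕ → ℕ} {α : ℝ} {Z : ℂ → ℂ}

lemma coef_nonneg (ν : ℕ → ℝ) (d : ℕ → ℕ) (m : ℕ) : 0 ≤ coef ν d m := by
  unfold coef; positivity

lemma log_nonneg (H : BeurlingZeta p ν d α Z) (m : ℕ) : 0 ≤ Real.log (ν m) :=
  Real.log_nonneg (H.one_le m)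

lemma nu_pos (H : BeurlingZeta p ν d α Z) (m : ℕ) : 0 < ν m := by linarith [H.one_le m]

lemma coef_eq (H : BeurlingZeta p ν d α Z) (m : ℕ) : coef ν d m = d m / ν m := by
  rw [coef, Real.exp_neg, Real.exp_log (H.nu_pos m)]; rfl

lemma ofReal_coef (m : ℕ) : ENNReal.ofReal (coef ν d m)
    = d m * ENNReal.ofReal (Real.exp (-Real.log (ν m))) := by
  rw [coef, ENNReal.ofReal_mul (by positivity), ENNReal.ofReal_natCast]

/-- The short-interval bound `BeurlingPrimes.short_sum` in terms of the coefficients of `Z`. -/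
lemma short (H : BeurlingZeta p ν d α Z) : ∃ C : ℕ, ∀ M : ℕ, ∃ K : ℝ, 0 < K ∧ ∀ l h : ℝ, 0 ≤ l → 0 < h →
    ∑' m, (if |Real.log (ν m) - l| ≤ h then ENNReal.ofReal (coef ν d m) else 0)
      ≤ ENNReal.ofReal (K * (l + h + 2) ^ C * (h + ((l + 2) ^ M)⁻¹)) := by
  classical
  obtain ⟨C, -, hV⟩ := H.primes.short_sum
  refine ⟨C, fun M => ?_⟩
  obtain ⟨K, hK, h⟩ := hV M
  refine ⟨K, hK, fun l r hl hr => le_trans (le_of_eq ?_) (h l r hl hr)⟩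
  have := H.primes.transfer H.one_le H.series H.product
    (fun x => if |x - l| ≤ r then ENNReal.ofReal (Real.exp (-1 * x)) else 0)
  simp only [wt]
  rw [← this]
  refine tsum_congr fun m => ?_
  split_ifs
  · rw [ofReal_coef]; simp
  · simp

/-- The series `∑ d m / ν m` converges once a large power of the logarithm is divided out. -/
lemma summable_coef (H : BeurlingZeta p ν d α Z) : ∃ M : ℕ,
    Summable fun m => coef ν d m * ((Real.log (ν m) + 2) ^ M)⁻¹ := by
  obtain ⟨M, hM⟩ := H.primes.summable_wt
  refine ⟨M, ?_⟩
  have := H.primes.transfer H.one_le H.series H.product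
    (fun x => ENNReal.ofReal (Real.exp (-1 * x)) * ENNReal.ofReal (((x + 2) ^ M)⁻¹))
  simp only [wt] at hM
  rw [← this] at hM
  have h2 := ENNReal.summable_toReal hM
  convert h2 using 2 with m
  have h0 := H.log_nonneg m
  rw [← mul_assoc, ENNReal.toReal_mul, ENNReal.toReal_ofReal (by positivity), coef,
    ENNReal.toReal_mul, ENNReal.toReal_ofReal (by positivity)]
  simp

lemma exp_mul_coef_summable (H : BeurlingZeta p ν d α Z) {δ : ℝ} (hδ : 0 < δ) :
    Summable fun m => coef ν d m * Real.exp (-(δ * Real.log (ν m))) := by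
  obtain ⟨M, hM⟩ := H.summable_coef
  refine Summable.of_nonneg_of_le (fun m => mul_nonneg (coef_nonneg _ _ _) (Real.exp_pos _).le)
    (fun m => ?_) (hM.mul_left (Real.exp (2 * δ) * (M.factorial / δ ^ M)))
  have h0 := H.log_nonneg m
  have h1 := BeurlingPrimes.exp_neg_mul_le hδ (n := M) (x := Real.log (ν m) + 2) (by positivity)
  have h2 : Real.exp (-(δ * Real.log (ν m))) = Real.exp (2 * δ) * Real.exp (-(δ * (Real.log (ν m) + 2))) := by
    rw [← Real.exp_add]; congr 1; ring
  rw [h2]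
  calc _ ≤ coef ν d m * (Real.exp (2 * δ) * (M.factorial / δ ^ M * ((Real.log (ν m) + 2) ^ M)⁻¹)) := by
        have := coef_nonneg ν d m
        gcongr
    _ = _ := by ring

/-- Letting the length of the interval in `short` tend to `0` shows that a single coefficient
`d m / ν m` is at most any given negative power of the logarithm, up
to a constant; `summable_coef` then applies. -/
lemma summable_sq (H : BeurlingZeta p ν d α Z) : Summable fun m => (d m : ℝ) ^ 2 / ν m ^ 2 := by
  obtain ⟨M, hM⟩ := H.summable_coef
  obtain ⟨C, hC⟩ := H.short
  obtain ⟨K, hK, h⟩ := hC (C + M)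
  have key : ∀ m, coef ν d m ≤ K * ((Real.log (ν m) + 2) ^ M)⁻¹ := by
    intro m
    have h0 := H.log_nonneg m
    have h1 : ∀ r : ℝ, 0 < r → coef ν d m ≤ K * (Real.log (ν m) + r + 2) ^ C *
        (r + ((Real.log (ν m) + 2) ^ (C + M))⁻¹) := by
      intro r hr
      have h2 := (ENNReal.le_tsum m).trans (h (Real.log (ν m)) r h0 hr)
      rw [if_pos (by simpa using hr.le)] at h2
      exact (ENNReal.ofReal_le_ofReal_iff (by positivity)).1 h2
    have h3 : Tendsto (fun r : ℝ => K * (Real.log (ν m) + r + 2) ^ C *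
        (r + ((Real.log (ν m) + 2) ^ (C + M))⁻¹)) (nhdsWithin 0 (Set.Ioi 0))
        (nhds (K * (Real.log (ν m) + 0 + 2) ^ C * (0 + ((Real.log (ν m) + 2) ^ (C + M))⁻¹))) := by
      refine Tendsto.mono_left ?_ nhdsWithin_le_nhds
      exact Continuous.tendsto (f := fun r : ℝ => K * (Real.log (ν m) + r + 2) ^ C *
        (r + ((Real.log (ν m) + 2) ^ (C + M))⁻¹)) (by fun_prop) 0
    have h4 := ge_of_tendsto h3 (eventually_nhdsWithin_of_forall fun r hr => h1 r hr)
    refine h4.trans (le_of_eq ?_)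
    rw [pow_add]; field_simp; ring
  refine Summable.of_nonneg_of_le (fun m => by positivity) (fun m => ?_) (hM.mul_left K)
  rw [← div_pow, ← H.coef_eq, sq]
  calc _ ≤ coef ν d m * (K * ((Real.log (ν m) + 2) ^ M)⁻¹) :=
        mul_le_mul_of_nonneg_left (key m) (coef_nonneg _ _ _)
    _ = _ := by ring

lemma gauss_weight (C : ℕ) (k : ℕ) : Real.exp (-((k:ℝ) ^ 2 / 4)) * ((k:ℝ) + 2) ^ (C + 1) ≤
    Real.exp 1 * ((C + 3).factorial * 4 ^ (C + 3)) * (1 / ((k:ℝ) + 1) ^ 2) := by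
  have h1 := BeurlingPrimes.exp_neg_mul_le (β := 1 / 4) (by norm_num) (n := C + 3) (x := (k:ℝ) + 2) (by positivity)
  have h2 : Real.exp (-((k:ℝ) ^ 2 / 4)) ≤ Real.exp 1 * Real.exp (-(1 / 4 * ((k:ℝ) + 2))) := by
    rw [← Real.exp_add]
    apply Real.exp_le_exp.2
    nlinarith [sq_nonneg ((k:ℝ) - 1 / 2)]
  calc _ ≤ (Real.exp 1 * ((C + 3).factorial / (1 / 4) ^ (C + 3) * (((k:ℝ) + 2) ^ (C + 3))⁻¹))
        * ((k:ℝ) + 2) ^ (C + 1) := by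
        gcongr
        exact h2.trans (by gcongr)
    _ = Real.exp 1 * ((C + 3).factorial * 4 ^ (C + 3)) * (1 / ((k:ℝ) + 2) ^ 2) := by
        rw [one_div_pow, pow_add _ C 1, pow_add _ C 3]; field_simp; ring
    _ ≤ _ := by
        gcongr
        norm_num

/-- Gaussian-weighted short-interval bound. The Gaussian of width `1 / T` is decomposed over the
intervals `|log (ν n) - l| ≤ (k + 1) / T`. -/
lemma gauss_sum (H : BeurlingZeta p ν d α Z) : ∃ C : ℕ, ∀ M : ℕ, ∃ K : ℝ, 0 < K ∧ ∀ l T : ℝ, 0 ≤ l → 1 ≤ T →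
    ∀ F : Finset ℕ, ∑ n ∈ F, coef ν d n * Real.exp (-(T ^ 2 * (l - Real.log (ν n)) ^ 2 / 4))
      ≤ K * (l + 2) ^ C * (1 / T + ((l + 2) ^ M)⁻¹) := by
  classical
  obtain ⟨C, hC⟩ := H.short
  refine ⟨C, fun M => ?_⟩
  obtain ⟨K, hK, h⟩ := hC M
  set A : ℝ := Real.exp 1 * ((C + 3).factorial * 4 ^ (C + 3)) with hA
  have hA0 : 0 < A := by positivity
  have hs : Summable fun k : ℕ => 1 / ((k:ℝ) + 1) ^ 2 := by
    have := (summable_nat_add_iff 1).2 (Real.summable_one_div_nat_pow.2 (by norm_num : 1 < 2))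
    simpa using this
  set B : ℝ := ∑' k : ℕ, 1 / ((k:ℝ) + 1) ^ 2 with hB
  have hB0 : 0 ≤ B := tsum_nonneg fun k => by positivity
  refine ⟨K * (A * (B + 1)), by positivity, fun l T hl hT F => ?_⟩
  have hT0 : 0 < T := by linarith
  set X : ℝ := ((l + 2) ^ M)⁻¹ with hX
  have hX0 : 0 < X := by positivity
  rw [← ENNReal.ofReal_le_ofReal_iff (by positivity), ENNReal.ofReal_sum_of_nonneg
    (fun n _ => mul_nonneg (coef_nonneg _ _ _) (Real.exp_pos _).le)]
  calc ∑ n ∈ F, ENNReal.ofReal (coef ν d n * Real.exp (-(T ^ 2 * (l - Real.log (ν n)) ^ 2 / 4)))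
      ≤ ∑' n, ENNReal.ofReal (coef ν d n * Real.exp (-(T ^ 2 * (l - Real.log (ν n)) ^ 2 / 4))) :=
        ENNReal.sum_le_tsum F
    _ ≤ ∑' n, ∑' k : ℕ, ENNReal.ofReal (Real.exp (-((k:ℝ) ^ 2 / 4))) *
          (if |Real.log (ν n) - l| ≤ ((k:ℝ) + 1) / T then ENNReal.ofReal (coef ν d n) else 0) := by
        refine ENNReal.tsum_le_tsum fun n => ?_
        set y : ℝ := T * |Real.log (ν n) - l| with hy
        have hy0 : 0 ≤ y := by positivity
        refine le_trans ?_ (ENNReal.le_tsum ⌊y⌋₊)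
        rw [if_pos, ← ENNReal.ofReal_mul (Real.exp_pos _).le, mul_comm]
        · apply ENNReal.ofReal_le_ofReal
          refine mul_le_mul_of_nonneg_right (Real.exp_le_exp.2 ?_) (coef_nonneg _ _ _)
          have h1 := Nat.floor_le hy0
          have h2 : T ^ 2 * (l - Real.log (ν n)) ^ 2 = y ^ 2 := by
            rw [hy, mul_pow, sq_abs]; ring
          rw [h2]
          have h3 : ((⌊y⌋₊ : ℕ) : ℝ) ^ 2 ≤ y ^ 2 := by gcongr
          linarith
        · rw [le_div_iff₀ hT0, mul_comm]
          exact (Nat.lt_floor_add_one y).le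
    _ = ∑' k : ℕ, ENNReal.ofReal (Real.exp (-((k:ℝ) ^ 2 / 4))) *
          ∑' n, (if |Real.log (ν n) - l| ≤ ((k:ℝ) + 1) / T then ENNReal.ofReal (coef ν d n) else 0) := by
        rw [ENNReal.tsum_comm]
        simp_rw [ENNReal.tsum_mul_left]
    _ ≤ ∑' k : ℕ, ENNReal.ofReal (K * A * (l + 2) ^ C * (1 / T + X) * (1 / ((k:ℝ) + 1) ^ 2)) := by
        refine ENNReal.tsum_le_tsum fun k => ?_
        refine (mul_le_mul_right (h l (((k:ℝ) + 1) / T) hl (by positivity)) _).trans ?_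
        rw [← ENNReal.ofReal_mul (Real.exp_pos _).le]
        apply ENNReal.ofReal_le_ofReal
        have hk : ((k:ℝ) + 1) / T ≤ (k:ℝ) + 1 := div_le_self (by positivity) hT
        have h1 : l + ((k:ℝ) + 1) / T + 2 ≤ (l + 2) * ((k:ℝ) + 2) := by
          nlinarith [(Nat.cast_nonneg k : (0:ℝ) ≤ k), mul_nonneg hl (Nat.cast_nonneg k : (0:ℝ) ≤ k)]
        have h2 : ((k:ℝ) + 1) / T + X ≤ (k + 2) * (1 / T + X) := by
          have : ((k:ℝ) + 1) / T = (k + 1) * (1 / T) := by ring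
          rw [this]
          have : 0 < 1 / T := by positivity
          nlinarith [(Nat.cast_nonneg k : (0:ℝ) ≤ k), mul_nonneg hX0.le (Nat.cast_nonneg k : (0:ℝ) ≤ k)]
        calc _ ≤ Real.exp (-((k:ℝ) ^ 2 / 4)) * (K * ((l + 2) * ((k:ℝ) + 2)) ^ C * ((k + 2) * (1 / T + X))) := by
              gcongr
          _ = (Real.exp (-((k:ℝ) ^ 2 / 4)) * ((k:ℝ) + 2) ^ (C + 1)) * (K * (l + 2) ^ C * (1 / T + X)) := by
              rw [mul_pow, pow_succ]; ring
          _ ≤ (A * (1 / ((k:ℝ) + 1) ^ 2)) * (K * (l + 2) ^ C * (1 / T + X)) := by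
              exact mul_le_mul_of_nonneg_right (gauss_weight C k) (by positivity)
          _ = _ := by ring
    _ = ENNReal.ofReal (K * A * (l + 2) ^ C * (1 / T + X) * B) := by
        rw [← ENNReal.ofReal_tsum_of_nonneg (fun k => by positivity) (hs.mul_left _), tsum_mul_left]
    _ ≤ _ := by
        apply ENNReal.ofReal_le_ofReal
        have h3 : B ≤ B + 1 := by linarith
        calc _ ≤ K * A * (l + 2) ^ C * (1 / T + X) * (B + 1) := by gcongr
          _ = _ := by ring

end BeurlingZeta

/-! ### Dirichlet polynomials and Gaussian mean values -/

/-- The Dirichlet polynomial `∑ c m * exp (-i * l m * t)` over `m ∈ F`. -/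
noncomputable def dpoly (c l : ℕ → ℝ) (F : Finset ℕ) (t : ℝ) : ℂ :=
  ∑ m ∈ F, (c m : ℂ) * Complex.exp (-(l m * t * Complex.I))

lemma dpoly_continuous (c l : ℕ → ℝ) (F : Finset ℕ) : Continuous (dpoly c l F) := by
  unfold dpoly; fun_prop

lemma dpoly_sq (c l : ℕ → ℝ) (F : Finset ℕ) (t : ℝ) :
    ((‖dpoly c l F t‖ ^ 2 : ℝ) : ℂ) = ∑ m ∈ F, ∑ n ∈ F, ((c m * c n : ℝ) : ℂ) *
      Complex.exp (Complex.I * ((-(l m - l n) : ℝ) : ℂ) * t) := by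
  rw [← Complex.normSq_eq_norm_sq, Complex.normSq_eq_conj_mul_self, mul_comm]
  simp only [dpoly, map_sum, map_mul, Complex.conj_ofReal]
  rw [Finset.sum_mul_sum]
  refine Finset.sum_congr rfl fun m _ => Finset.sum_congr rfl fun n _ => ?_
  rw [← Complex.exp_conj]
  simp only [map_neg, map_mul, Complex.conj_ofReal, Complex.conj_I]
  push_cast
  rw [mul_mul_mul_comm, ← Complex.exp_add]
  congr 2; ring

/-- Mean square of a Dirichlet polynomial against a Gaussian of width `T`, evaluated exactly by the
Fourier transform of the Gaussian. Off-diagonal terms come out positive, which is why nonnegative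
coefficients can be treated by counting. -/
lemma gauss_mean (c l : ℕ → ℝ) (F : Finset ℕ) {T : ℝ} (hT : 0 < T) :
    MeasureTheory.Integrable (fun t : ℝ => ‖dpoly c l F t‖ ^ 2 * Real.exp (-(1 / T ^ 2) * t ^ 2)) ∧
    ∫ t : ℝ, ‖dpoly c l F t‖ ^ 2 * Real.exp (-(1 / T ^ 2) * t ^ 2) =
      √Real.pi * T * ∑ m ∈ F, ∑ n ∈ F, c m * c n * Real.exp (-(T ^ 2 * (l m - l n) ^ 2 / 4)) := by
  have hb : 0 < ((1 / T ^ 2 : ℝ) : ℂ).re := by rw [Complex.ofReal_re]; positivity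
  have h1 : (fun t : ℝ => ((‖dpoly c l F t‖ ^ 2 * Real.exp (-(1 / T ^ 2) * t ^ 2) : ℝ) : ℂ))
      = fun t : ℝ => ∑ m ∈ F, ∑ n ∈ F, ((c m * c n : ℝ) : ℂ) *
      (Complex.exp (Complex.I * ((-(l m - l n) : ℝ) : ℂ) * t) *
        Complex.exp (-((1 / T ^ 2 : ℝ) : ℂ) * t ^ 2)) := by
    ext t
    rw [Complex.ofReal_mul, dpoly_sq, Finset.sum_mul]
    refine Finset.sum_congr rfl fun m _ => ?_
    rw [Finset.sum_mul]
    refine Finset.sum_congr rfl fun n _ => ?_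
    push_cast
    rw [mul_assoc]
  have h2 : ∀ m n, MeasureTheory.Integrable (fun t : ℝ => ((c m * c n : ℝ) : ℂ) *
      (Complex.exp (Complex.I * ((-(l m - l n) : ℝ) : ℂ) * t) *
        Complex.exp (-((1 / T ^ 2 : ℝ) : ℂ) * t ^ 2))) := by
    intro m n
    refine MeasureTheory.Integrable.const_mul ?_ _
    have := integrable_cexp_quadratic hb (Complex.I * ((-(l m - l n) : ℝ) : ℂ)) 0
    refine this.congr (Eventually.of_forall fun t => ?_)
    simp only
    rw [← Complex.exp_add]; congr 1; ring
  have h3 : MeasureTheory.Integrable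
      (fun t : ℝ => ((‖dpoly c l F t‖ ^ 2 * Real.exp (-(1 / T ^ 2) * t ^ 2) : ℝ) : ℂ)) := by
    rw [h1]
    exact MeasureTheory.integrable_finsetSum _ fun m _ =>
      MeasureTheory.integrable_finsetSum _ fun n _ => h2 m n
  refine ⟨?_, ?_⟩
  · exact h3.re
  · rw [← Complex.ofReal_inj, ← integral_complex_ofReal, h1,
      MeasureTheory.integral_finsetSum _ fun m _ =>
        MeasureTheory.integrable_finsetSum _ fun n _ => h2 m n]
    rw [Finset.mul_sum, Complex.ofReal_sum]
    refine Finset.sum_congr rfl fun m _ => ?_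
    rw [MeasureTheory.integral_finsetSum _ fun n _ => h2 m n, Finset.mul_sum, Complex.ofReal_sum]
    refine Finset.sum_congr rfl fun n _ => ?_
    rw [MeasureTheory.integral_const_mul, fourierIntegral_gaussian hb]
    have h4 : ((Real.pi : ℂ) / ((1 / T ^ 2 : ℝ) : ℂ)) ^ (1 / 2 : ℂ) = ((√Real.pi * T : ℝ) : ℂ) := by
      have e : √Real.pi * T = (Real.pi / (1 / T ^ 2)) ^ (1 / 2 : ℝ) := by
        rw [← Real.sqrt_eq_rpow, show Real.pi / (1 / T ^ 2) = Real.pi * T ^ 2 by field_simp,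
          Real.sqrt_mul Real.pi_pos.le, Real.sqrt_sq hT.le]
      rw [e, Complex.ofReal_cpow (by positivity)]
      push_cast; rfl
    rw [h4]
    push_cast
    have h5 : (-(-((l m:ℂ) - l n)) ^ 2 / (4 * (1 / (T:ℂ) ^ 2))) = -((T:ℂ) ^ 2 * (l m - l n) ^ 2 / 4) := by
      have : (T:ℂ) ≠ 0 := by exact_mod_cast hT.ne'
      field_simp
    rw [h5]; ring

/-- The sharp cut-off at `T` is at most `e` times the Gaussian weight. -/
lemma mean_le (c l : ℕ → ℝ) (F : Finset ℕ) {T : ℝ} (hT : 1 ≤ T) :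
    ∫ t in (1:ℝ)..T, ‖dpoly c l F t‖ ^ 2 ≤ Real.exp 1 * (√Real.pi * T *
      ∑ m ∈ F, ∑ n ∈ F, c m * c n * Real.exp (-(T ^ 2 * (l m - l n) ^ 2 / 4))) := by
  have hT0 : 0 < T := by linarith
  obtain ⟨h1, h2⟩ := gauss_mean c l F hT0
  rw [← h2, intervalIntegral.integral_of_le hT, ← MeasureTheory.integral_const_mul]
  refine le_trans (MeasureTheory.setIntegral_mono_on ?_ (h1.const_mul _).integrableOn
    measurableSet_Ioc ?_) (MeasureTheory.setIntegral_le_integral (h1.const_mul (Real.exp 1))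
      (Eventually.of_forall fun t => by positivity))
  · have : IntervalIntegrable (fun t => ‖dpoly c l F t‖ ^ 2) MeasureTheory.volume 1 T :=
      ((dpoly_continuous c l F).norm.pow 2).intervalIntegrable _ _
    exact (intervalIntegrable_iff_integrableOn_Ioc_of_le hT).1 this
  · intro t ht
    have : 1 ≤ Real.exp 1 * Real.exp (-(1 / T ^ 2) * t ^ 2) := by
      rw [← Real.exp_add]
      apply Real.one_le_exp
      have : t ^ 2 ≤ T ^ 2 := by
        have := ht.1; have := ht.2; gcongr
      have h3 : 1 / T ^ 2 * t ^ 2 ≤ 1 := by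
        rw [one_div_mul_eq_div, div_le_one (by positivity)]; exact this
      linarith
    calc ‖dpoly c l F t‖ ^ 2 = ‖dpoly c l F t‖ ^ 2 * 1 := by ring
      _ ≤ ‖dpoly c l F t‖ ^ 2 * (Real.exp 1 * Real.exp (-(1 / T ^ 2) * t ^ 2)) := by gcongr
      _ = _ := by ring

lemma integral_exp_tendsto {θ : ℝ} (hθ : θ ≠ 0) :
    Tendsto (fun T : ℝ => ((1 / T : ℝ) : ℂ) * ∫ t in (1:ℝ)..T, Complex.exp (Complex.I * (θ:ℂ) * t))
      atTop (nhds 0) := by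
  have hc : Complex.I * (θ:ℂ) ≠ 0 := mul_ne_zero Complex.I_ne_zero (by exact_mod_cast hθ)
  rw [tendsto_zero_iff_norm_tendsto_zero]
  have h0 : Tendsto (fun T : ℝ => (2 / |θ|) * T⁻¹) atTop (nhds 0) := by
    simpa using tendsto_inv_atTop_zero.const_mul (2 / |θ|)
  refine squeeze_zero' (Eventually.of_forall fun _ => norm_nonneg _) ?_ h0
  filter_upwards [eventually_gt_atTop 0] with T hT
  rw [integral_exp_mul_complex hc, norm_mul, norm_div, norm_mul, Complex.norm_I, Complex.norm_real,
    Complex.norm_real, one_mul, Real.norm_of_nonneg (by positivity), Real.norm_eq_abs]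
  have e : ∀ x : ℝ, ‖Complex.exp (Complex.I * (θ:ℂ) * x)‖ = 1 := fun x => by
    rw [show Complex.I * (θ:ℂ) * x = ((θ * x : ℝ) : ℂ) * Complex.I by push_cast; ring,
      Complex.norm_exp_ofReal_mul_I]
  have h3 : ‖Complex.exp (Complex.I * (θ:ℂ) * T) - Complex.exp (Complex.I * (θ:ℂ) * (1:ℝ))‖ ≤ 2 := by
    refine (norm_sub_le _ _).trans ?_
    rw [e, e]; norm_num
  have hθ' : 0 < |θ| := abs_pos.2 hθ
  calc _ ≤ 1 / T * (2 / |θ|) := by gcongr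
    _ = _ := by ring

/-- The mean square of a Dirichlet polynomial with distinct frequencies is the sum of the squares of
its coefficients, as the off-diagonal terms oscillate. -/
lemma mean_tendsto (c l : ℕ → ℝ) (hl : Function.Injective l) (F : Finset ℕ) :
    Tendsto (fun T : ℝ => (1 / T) * ∫ t in (1:ℝ)..T, ‖dpoly c l F t‖ ^ 2) atTop
      (nhds (∑ m ∈ F, c m ^ 2)) := by
  have hconv : Tendsto (fun T : ℝ => ((((1 / T) * ∫ t in (1:ℝ)..T, ‖dpoly c l F t‖ ^ 2 : ℝ)) : ℂ)) atTop
      (nhds (∑ m ∈ F, ∑ n ∈ F, ((c m * c n : ℝ) : ℂ) * (if m = n then 1 else 0))) := by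
    have e : ∀ T : ℝ, ((((1 / T) * ∫ t in (1:ℝ)..T, ‖dpoly c l F t‖ ^ 2 : ℝ)) : ℂ) =
        ∑ m ∈ F, ∑ n ∈ F, ((c m * c n : ℝ) : ℂ) * (((1 / T : ℝ) : ℂ) *
          ∫ t in (1:ℝ)..T, Complex.exp (Complex.I * ((-(l m - l n) : ℝ) : ℂ) * t)) := by
      intro T
      rw [Complex.ofReal_mul, ← intervalIntegral.integral_ofReal]
      simp_rw [dpoly_sq]
      have hi : ∀ m n, IntervalIntegrable (fun t : ℝ => ((c m * c n : ℝ) : ℂ) *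
          Complex.exp (Complex.I * ((-(l m - l n) : ℝ) : ℂ) * t)) MeasureTheory.volume 1 T :=
        fun m n => Continuous.intervalIntegrable (by fun_prop) _ _
      rw [intervalIntegral.integral_finsetSum fun m _ => by
        exact Continuous.intervalIntegrable (by fun_prop) _ _, Finset.mul_sum]
      refine Finset.sum_congr rfl fun m _ => ?_
      rw [intervalIntegral.integral_finsetSum fun n _ => hi m n, Finset.mul_sum]
      refine Finset.sum_congr rfl fun n _ => ?_
      rw [intervalIntegral.integral_const_mul]; ring
    simp_rw [e]
    refine tendsto_finsetSum _ fun m _ => tendsto_finsetSum _ fun n _ => Tendsto.const_mul _ ?_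
    split_ifs with h
    · subst h
      have h1 : Tendsto (fun T : ℝ => (((1 - T⁻¹ : ℝ)) : ℂ)) atTop (nhds 1) := by
        have : Tendsto (fun T : ℝ => 1 - T⁻¹) atTop (nhds (1 - 0)) :=
          tendsto_inv_atTop_zero.const_sub 1
        have := (Complex.continuous_ofReal.tendsto _).comp this
        simpa only [sub_zero, Complex.ofReal_one, Function.comp_def] using this
      refine h1.congr' ?_
      filter_upwards [eventually_gt_atTop 0] with T hT
      have : (T:ℂ) ≠ 0 := by exact_mod_cast hT.ne'
      simp only [sub_self, neg_zero, Complex.ofReal_zero, mul_zero, zero_mul, Complex.exp_zero]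
      rw [intervalIntegral.integral_const, Complex.real_smul]
      push_cast; field_simp
    · apply integral_exp_tendsto
      intro h0
      exact h (hl (by linarith))
  have h2 := (Complex.continuous_re.tendsto _).comp hconv
  have e2 : (∑ m ∈ F, ∑ n ∈ F, ((c m * c n : ℝ) : ℂ) * (if m = n then 1 else 0)) = ((∑ m ∈ F, c m ^ 2 : ℝ) : ℂ) := by
    push_cast
    refine Finset.sum_congr rfl fun m hm => ?_
    rw [Finset.sum_eq_single m]
    · simp; ring
    · intro n _ hn; simp [hn.symm]
    · intro h; exact absurd hm h
  rw [e2] at h2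
  exact h2

/-! ### Mean square to the right of the 1-line -/

namespace BeurlingZeta

variable {p ν : ℕ → ℝ} {d : ℕ → ℕ} {α : ℝ} {Z : ℂ → ℂ}

/-- The coefficients `d m / ν m ^ (1 + δ)` of `t ↦ Z (1 + δ + i t)`. -/
noncomputable def dcoef (ν : ℕ → ℝ) (d : ℕ → ℕ) (δ : ℝ) (m : ℕ) : ℝ :=
  coef ν d m * Real.exp (-(δ * Real.log (ν m)))

lemma dcoef_nonneg (ν : ℕ → ℝ) (d : ℕ → ℕ) (δ : ℝ) (m : ℕ) : 0 ≤ dcoef ν d δ m :=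
  mul_nonneg (coef_nonneg _ _ _) (Real.exp_pos _).le

lemma dcoef_le (H : BeurlingZeta p ν d α Z) {δ : ℝ} (hδ : 0 ≤ δ) (m : ℕ) :
    dcoef ν d δ m ≤ coef ν d m := by
  have := H.log_nonneg m
  exact mul_le_of_le_one_right (coef_nonneg _ _ _) (Real.exp_le_one_iff.2 (by
    have := mul_nonneg hδ this; linarith))

lemma hasSum_Z (H : BeurlingZeta p ν d α Z) {δ : ℝ} (hδ : 0 < δ) (t : ℝ) :
    HasSum (fun m => (dcoef ν d δ m : ℂ) * Complex.exp (-((Real.log (ν m) : ℝ) * t * Complex.I)))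
      (Z (1 + δ + t * Complex.I)) := by
  have hs : Summable (fun m => (dcoef ν d δ m : ℂ) *
      Complex.exp (-((Real.log (ν m) : ℝ) * t * Complex.I))) := by
    refine Summable.of_norm_bounded (H.exp_mul_coef_summable hδ) fun m => ?_
    rw [norm_mul, Complex.norm_real, Real.norm_of_nonneg (dcoef_nonneg _ _ _ _)]
    have : ‖Complex.exp (-((Real.log (ν m) : ℝ) * t * Complex.I))‖ = 1 := by
      rw [show -(((Real.log (ν m) : ℝ) : ℂ) * t * Complex.I)
        = ((-(Real.log (ν m) * t) : ℝ) : ℂ) * Complex.I by push_cast; ring,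
        Complex.norm_exp_ofReal_mul_I]
    rw [this, mul_one]; rfl
  have e : (fun m => (dcoef ν d δ m : ℂ) * Complex.exp (-((Real.log (ν m) : ℝ) * t * Complex.I)))
      = fun m => (d m : ℂ) / (ν m : ℂ) ^ (1 + δ + t * Complex.I : ℂ) := by
    ext m
    rw [BeurlingPrimes.term_eq (H.nu_pos m), dcoef, coef]
    push_cast
    rw [mul_assoc, mul_assoc, ← Complex.exp_add, ← Complex.exp_add]
    congr 2; ring
  rw [H.series _ (by simpa using hδ), ← e]
  exact hs.hasSum

lemma norm_dpoly_le (c l : ℕ → ℝ) (hc : ∀ m, 0 ≤ c m) (F : Finset ℕ) (t : ℝ) :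
    ‖dpoly c l F t‖ ≤ ∑ m ∈ F, c m := by
  refine (norm_sum_le _ _).trans (Finset.sum_le_sum fun m _ => ?_)
  rw [norm_mul, Complex.norm_real, Real.norm_of_nonneg (hc m),
    show -((l m : ℂ) * t * Complex.I) = ((-(l m * t) : ℝ) : ℂ) * Complex.I by push_cast; ring,
    Complex.norm_exp_ofReal_mul_I, mul_one]

/-- Mean squares of the Dirichlet polynomials of `Z (1 + δ + i t)` are bounded by a convergent series
independent of `T` and `δ`, provided that `δ` is at least a small negative power of `T`. The factor
`ν m ^ (-δ)` and the condition `1 ≤ δ ^ N * T` absorb the term `1 / T` in `gauss_sum`, which would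
otherwise carry an unbounded power of `log (ν m)`. -/
lemma mean_finite (H : BeurlingZeta p ν d α Z) : ∃ (N : ℕ) (K : ℝ) (g : ℕ → ℝ), 0 < K ∧
    (∀ m, 0 ≤ g m) ∧ Summable g ∧ ∀ T δ : ℝ, 1 ≤ T → 0 < δ → δ ≤ 1 → 1 ≤ δ ^ N * T →
      ∀ F : Finset ℕ, (1 / T) * ∫ t in (1:ℝ)..T,
        ‖dpoly (dcoef ν d δ) (fun m => Real.log (ν m)) F t‖ ^ 2 ≤ K * ∑ m ∈ F, g m := by
  obtain ⟨M, hM⟩ := H.summable_coef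
  obtain ⟨C, hC⟩ := H.gauss_sum
  obtain ⟨K, hK, h⟩ := hC (C + M)
  set L : ℝ := Real.exp 2 * (C + M).factorial with hL
  have hL0 : 0 < L := by positivity
  refine ⟨C + M, Real.exp 1 * √Real.pi * K * (L + 1), _, by positivity, fun m => ?_, hM, ?_⟩
  · have := H.log_nonneg m
    have := coef_nonneg ν d m
    positivity
  intro T δ hT hδ hδ1 hN F
  have hT0 : 0 < T := by linarith
  have key : ∀ m, dcoef ν d δ m * (K * (Real.log (ν m) + 2) ^ C *
      (1 / T + ((Real.log (ν m) + 2) ^ (C + M))⁻¹)) ≤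
      K * (L + 1) * (coef ν d m * ((Real.log (ν m) + 2) ^ M)⁻¹) := by
    intro m
    have h0 := H.log_nonneg m
    have hb := coef_nonneg ν d m
    set x := Real.log (ν m) with hx
    have h1 : Real.exp (-(δ * x)) * (1 / T) ≤ L * ((x + 2) ^ (C + M))⁻¹ := by
      have h2 := BeurlingPrimes.exp_neg_mul_le hδ (n := C + M) (x := x + 2) (by positivity)
      have h3 : Real.exp (-(δ * x)) ≤ Real.exp 2 * Real.exp (-(δ * (x + 2))) := by
        rw [← Real.exp_add]
        apply Real.exp_le_exp.2
        nlinarith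
      calc _ ≤ (Real.exp 2 * ((C + M).factorial / δ ^ (C + M) * ((x + 2) ^ (C + M))⁻¹)) * (1 / T) := by
            gcongr
            exact h3.trans (by gcongr)
        _ = L * ((x + 2) ^ (C + M))⁻¹ * (1 / (δ ^ (C + M) * T)) := by
            rw [hL]; field_simp
        _ ≤ L * ((x + 2) ^ (C + M))⁻¹ * 1 := by
            gcongr
            rw [div_le_one (by positivity)]; exact hN
        _ = _ := mul_one _
    have h4 : Real.exp (-(δ * x)) ≤ 1 := Real.exp_le_one_iff.2 (by nlinarith)
    have h5 : Real.exp (-(δ * x)) * (1 / T + ((x + 2) ^ (C + M))⁻¹) ≤ (L + 1) * ((x + 2) ^ (C + M))⁻¹ := by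
      have : Real.exp (-(δ * x)) * ((x + 2) ^ (C + M))⁻¹ ≤ 1 * ((x + 2) ^ (C + M))⁻¹ := by gcongr
      linarith
    calc _ = coef ν d m * K * (x + 2) ^ C * (Real.exp (-(δ * x)) * (1 / T + ((x + 2) ^ (C + M))⁻¹)) := by
          rw [dcoef]; ring
      _ ≤ coef ν d m * K * (x + 2) ^ C * ((L + 1) * ((x + 2) ^ (C + M))⁻¹) := by gcongr
      _ = _ := by rw [pow_add]; field_simp
  have h6 := mean_le (dcoef ν d δ) (fun m => Real.log (ν m)) F hT
  have h7 : ∑ m ∈ F, ∑ n ∈ F, dcoef ν d δ m * dcoef ν d δ n *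
      Real.exp (-(T ^ 2 * (Real.log (ν m) - Real.log (ν n)) ^ 2 / 4)) ≤
      K * (L + 1) * ∑ m ∈ F, coef ν d m * ((Real.log (ν m) + 2) ^ M)⁻¹ := by
    rw [Finset.mul_sum]
    refine Finset.sum_le_sum fun m _ => le_trans ?_ (key m)
    refine le_trans ?_ (mul_le_mul_of_nonneg_left (h (Real.log (ν m)) T (H.log_nonneg m) hT F)
      (dcoef_nonneg _ _ _ _))
    rw [Finset.mul_sum]
    refine Finset.sum_le_sum fun n _ => ?_
    rw [mul_assoc]
    refine mul_le_mul_of_nonneg_left ?_ (dcoef_nonneg _ _ _ _)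
    exact mul_le_mul_of_nonneg_right (H.dcoef_le hδ.le n) (Real.exp_pos _).le
  calc _ ≤ (1 / T) * (Real.exp 1 * (√Real.pi * T * (K * (L + 1) *
        ∑ m ∈ F, coef ν d m * ((Real.log (ν m) + 2) ^ M)⁻¹))) := by
        gcongr
        exact h6.trans (by gcongr)
    _ = _ := by field_simp

/-- The truncations of the Dirichlet series approximate `Z (1 + δ + i t)` in mean square, uniformly in
the admissible `T` and `δ`. -/
lemma mean_tail (H : BeurlingZeta p ν d α Z) : ∃ (N : ℕ) (ε : ℕ → ℝ),
    Tendsto ε atTop (nhds 0) ∧ ∀ T δ : ℝ, 1 ≤ T → 0 < δ → δ ≤ 1 → 1 ≤ δ ^ N * T →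
      ∀ m0 : ℕ, (1 / T) * ∫ t in (1:ℝ)..T, ‖Z (1 + δ + t * Complex.I) -
        dpoly (dcoef ν d δ) (fun m => Real.log (ν m)) (Finset.range m0) t‖ ^ 2 ≤ ε m0 := by
  obtain ⟨N, K, g, hK, hg, hgs, h⟩ := H.mean_finite
  refine ⟨N, fun m0 => K * ∑' m, g (m + m0), ?_, ?_⟩
  · simpa using (tendsto_sum_nat_add g).const_mul K
  intro T δ hT hδ hδ1 hN m0
  set c := dcoef ν d δ with hc
  set l : ℕ → ℝ := fun m => Real.log (ν m) with hl
  have hcs : Summable c := H.exp_mul_coef_summable hδ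
  have hdiff : ∀ n, m0 ≤ n → ∀ t, dpoly c l (Finset.range n \ Finset.range m0) t
      = dpoly c l (Finset.range n) t - dpoly c l (Finset.range m0) t := by
    intro n hn t
    rw [eq_sub_iff_add_eq]
    exact Finset.sum_sdiff (Finset.range_subset_range.2 hn)
  have hlim : Tendsto (fun n => (1 / T) * ∫ t in (1:ℝ)..T,
      ‖dpoly c l (Finset.range n) t - dpoly c l (Finset.range m0) t‖ ^ 2) atTop
      (nhds ((1 / T) * ∫ t in (1:ℝ)..T, ‖Z (1 + δ + t * Complex.I) -
        dpoly c l (Finset.range m0) t‖ ^ 2)) := by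
    refine Tendsto.const_mul _ ?_
    refine intervalIntegral.tendsto_integral_filter_of_dominated_convergence
      (fun _ => (∑' m, c m + ∑' m, c m) ^ 2) ?_ ?_ ?_ ?_
    · refine Eventually.of_forall fun n => Continuous.aestronglyMeasurable ?_
      exact (((dpoly_continuous c l _).sub (dpoly_continuous c l _)).norm.pow 2)
    · refine Eventually.of_forall fun n => Eventually.of_forall fun t _ => ?_
      rw [Real.norm_of_nonneg (by positivity)]
      have h1 : ∀ n, ‖dpoly c l (Finset.range n) t‖ ≤ ∑' m, c m := fun n =>
        (norm_dpoly_le c l (dcoef_nonneg _ _ _) _ t).trans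
          (hcs.sum_le_tsum _ fun m _ => dcoef_nonneg _ _ _ m)
      have := (norm_sub_le (dpoly c l (Finset.range n) t) (dpoly c l (Finset.range m0) t)).trans
        (add_le_add (h1 n) (h1 m0))
      gcongr
    · exact intervalIntegrable_const
    · refine Eventually.of_forall fun t _ => ?_
      have := (H.hasSum_Z hδ t).tendsto_sum_nat
      exact ((this.sub_const _).norm.pow 2)
  refine le_of_tendsto hlim ?_
  filter_upwards [eventually_ge_atTop m0] with n hn
  simp_rw [← hdiff n hn]
  refine (h T δ hT hδ hδ1 hN _).trans ?_
  refine mul_le_mul_of_nonneg_left ?_ hK.le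
  have h2 : ∑ m ∈ Finset.range n \ Finset.range m0, g m = ∑ m ∈ Finset.range (n - m0), g (m + m0) := by
    have e : Finset.range n \ Finset.range m0 = Finset.Ico m0 n := by
      ext k; simp; omega
    rw [e, Finset.sum_Ico_eq_sum_range]
    exact Finset.sum_congr rfl fun k _ => by rw [add_comm]
  rw [h2]
  exact ((summable_nat_add_iff m0).2 hgs).sum_le_tsum _ fun m _ => hg _

end BeurlingZeta

/-! ### Partial summation over primes -/

namespace BeurlingPrimes

variable {p : ℕ → ℝ} {α : ℝ}

section calculus

open MeasureTheory

lemma norm_cexp_log (s : ℂ) (x : ℝ) :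
    ‖Complex.exp (-s * Real.log x)‖ = Real.exp (-s.re * Real.log x) := by
  rw [Complex.norm_exp]; simp

lemma norm_cexp_log_le {s : ℂ} (hs : 1 ≤ s.re) {x : ℝ} (hx : 1 ≤ x) :
    ‖Complex.exp (-s * Real.log x)‖ ≤ 1 / x := by
  rw [norm_cexp_log, one_div, ← Real.exp_log (show 0 < x by linarith), ← Real.exp_neg, Real.log_exp]
  apply Real.exp_le_exp.2
  nlinarith [Real.log_nonneg hx]

lemma hasDerivAt_cexp_log (s : ℂ) {x : ℝ} (hx : 0 < x) :
    HasDerivAt (fun x : ℝ => Complex.exp (-s * Real.log x))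
      (Complex.exp (-s * Real.log x) * (-s * ((x⁻¹ : ℝ) : ℂ))) x :=
  (((Real.hasDerivAt_log hx.ne').ofReal_comp).const_mul (-s)).cexp

/-- The derivative of `x ↦ x ^ (-s) = exp (-s * log x)`. -/
noncomputable def dphi (s : ℂ) (x : ℝ) : ℂ := Complex.exp (-s * Real.log x) * (-s * ((x⁻¹ : ℝ) : ℂ))

lemma dphi_continuousOn (s : ℂ) {X Y : ℝ} (hX : 0 < X) : ContinuousOn (dphi s) (Set.Icc X Y) := by
  unfold dphi
  have h0 : ∀ x ∈ Set.Icc X Y, x ≠ 0 := fun x hx => by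
    have := hx.1; linarith [this] |> fun h : 0 < x => h.ne'
  have h1 : ContinuousOn (fun x : ℝ => ((Real.log x : ℝ) : ℂ)) (Set.Icc X Y) :=
    Complex.continuous_ofReal.comp_continuousOn (Real.continuousOn_log.mono fun x hx => h0 x hx)
  have h2 : ContinuousOn (fun x : ℝ => ((x⁻¹ : ℝ) : ℂ)) (Set.Icc X Y) :=
    Complex.continuous_ofReal.comp_continuousOn (continuousOn_inv₀.mono fun x hx => h0 x hx)
  exact ((continuousOn_const.mul h1).cexp).mul (continuousOn_const.mul h2)

lemma norm_dphi_le {s : ℂ} (hs : 1 ≤ s.re) {x : ℝ} (hx : 1 ≤ x) :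
    ‖dphi s x‖ ≤ ‖s‖ * (1 / x * (1 / x)) := by
  rw [dphi, norm_mul, norm_mul, norm_neg, Complex.norm_real, Real.norm_of_nonneg (by positivity)]
  have h1 := norm_cexp_log_le hs hx
  calc _ ≤ 1 / x * (‖s‖ * x⁻¹) := by gcongr
    _ = _ := by ring

/-- Partial summation for `∑ p j ^ (-s)` over a finite set of primes in `(X, Y]`. -/
lemma partial_sum (J : Finset ℕ) (s : ℂ) {X Y : ℝ} (hX : 0 < X)
    (hJ : ∀ j ∈ J, X < p j ∧ p j ≤ Y) :
    IntervalIntegrable (fun x => ((∑ j ∈ J, (if p j ≤ x then 1 else 0) : ℝ) : ℂ) * dphi s x) volume X Y ∧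
    ∑ j ∈ J, Complex.exp (-s * Real.log (p j)) = J.card * Complex.exp (-s * Real.log Y) -
      ∫ x in X..Y, ((∑ j ∈ J, (if p j ≤ x then 1 else 0) : ℝ) : ℂ) * dphi s x := by
  classical
  rcases J.eq_empty_or_nonempty with rfl | ⟨j0, hj0⟩
  · simp
  have hXY : X ≤ Y := (hJ j0 hj0).1.le.trans (hJ j0 hj0).2
  have e : (fun x => ((∑ j ∈ J, (if p j ≤ x then 1 else 0) : ℝ) : ℂ) * dphi s x) =
      fun x => ∑ j ∈ J, (Set.Ici (p j)).indicator (dphi s) x := by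
    ext x
    push_cast
    rw [Finset.sum_mul]
    refine Finset.sum_congr rfl fun j _ => ?_
    by_cases h : p j ≤ x
    · simp [h]
    · simp [h]
  have h_int : IntegrableOn (dphi s) (Set.Ioc X Y) :=
    ((dphi_continuousOn s hX).integrableOn_Icc).mono_set Set.Ioc_subset_Icc_self
  have hi : ∀ j, IntervalIntegrable ((Set.Ici (p j)).indicator (dphi s)) volume X Y := fun j => by
    rw [intervalIntegrable_iff_integrableOn_Ioc_of_le hXY]
    exact h_int.indicator measurableSet_Ici
  have hi2 : IntervalIntegrable (fun x => ∑ j ∈ J, (Set.Ici (p j)).indicator (dphi s) x) volume X Y := by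
    rw [intervalIntegrable_iff_integrableOn_Ioc_of_le hXY]
    exact integrable_finsetSum _ fun j _ => h_int.indicator measurableSet_Ici
  rw [e]
  refine ⟨hi2, ?_⟩
  rw [intervalIntegral.integral_finsetSum fun j _ => hi j, eq_sub_iff_add_eq, ← Finset.sum_add_distrib]
  rw [Finset.sum_congr rfl (g := fun _ => Complex.exp (-s * Real.log Y)), Finset.sum_const, nsmul_eq_mul]
  intro j hj
  obtain ⟨h1, h2⟩ := hJ j hj
  have h3 : ∫ x in X..Y, (Set.Ici (p j)).indicator (dphi s) x = ∫ x in (p j)..Y, dphi s x := by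
    rw [intervalIntegral.integral_of_le hXY, setIntegral_indicator measurableSet_Ici,
      intervalIntegral.integral_of_le h2, ← integral_Icc_eq_integral_Ioc]
    congr 2
    ext x
    simp only [Set.mem_inter_iff, Set.mem_Ioc, Set.mem_Ici, Set.mem_Icc]
    constructor
    · rintro ⟨⟨_, h⟩, h'⟩; exact ⟨h', h⟩
    · rintro ⟨h, h'⟩; exact ⟨⟨by linarith, h'⟩, h⟩
  rw [h3, intervalIntegral.integral_eq_sub_of_hasDerivAt (f := fun x : ℝ => Complex.exp (-s * Real.log x))]
  · ring
  · intro x hx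
    rw [Set.uIcc_of_le h2] at hx
    exact hasDerivAt_cexp_log s (by linarith [hx.1])
  · apply ContinuousOn.intervalIntegrable
    rw [Set.uIcc_of_le h2]
    exact dphi_continuousOn s (by linarith)

lemma inv_log_continuousOn {X Y : ℝ} (hX : 1 < X) :
    ContinuousOn (fun t : ℝ => 1 / Real.log t) (Set.Icc X Y) := by
  intro t ht
  have : 1 < t := by linarith [ht.1]
  exact (continuousAt_const.div (Real.continuousAt_log (by linarith))
    (Real.log_pos this).ne').continuousWithinAt

lemma hasDerivAt_log_integral {X Y : ℝ} (hX : 1 < X) {x : ℝ} (hx : x ∈ Set.Ioo X Y) :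
    HasDerivAt (fun x => ∫ t in X..x, 1 / Real.log t) (1 / Real.log x) x := by
  have hx1 : 1 < x := by linarith [hx.1]
  have hc : ContinuousOn (fun t : ℝ => 1 / Real.log t) (Set.Ioi 1) := by
    intro t ht
    have : (1:ℝ) < t := ht
    exact (continuousAt_const.div (Real.continuousAt_log (by linarith))
      (Real.log_pos this).ne').continuousWithinAt
  refine intervalIntegral.integral_hasDerivAt_right (inv_log_integrable hX hx.1.le) ?_ ?_
  · exact hc.stronglyMeasurableAtFilter isOpen_Ioi x hx1
  · exact hc.continuousAt (Ioi_mem_nhds hx1)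

/-- Integration by parts for the main term. -/
lemma log_integral_parts (s : ℂ) {X Y : ℝ} (hX : 1 < X) (hXY : X ≤ Y) :
    IntervalIntegrable (fun x => ((∫ t in X..x, 1 / Real.log t : ℝ) : ℂ) * dphi s x) volume X Y ∧
    ∫ x in X..Y, ((1 / Real.log x : ℝ) : ℂ) * Complex.exp (-s * Real.log x) =
      ((∫ t in X..Y, 1 / Real.log t : ℝ) : ℂ) * Complex.exp (-s * Real.log Y) -
      ∫ x in X..Y, ((∫ t in X..x, 1 / Real.log t : ℝ) : ℂ) * dphi s x := by
  have hG : ContinuousOn (fun x => ((∫ t in X..x, 1 / Real.log t : ℝ) : ℂ)) (Set.Icc X Y) := by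
    refine Complex.continuous_ofReal.comp_continuousOn ?_
    have := intervalIntegral.continuousOn_primitive_interval (μ := volume) (a := X) (b := Y)
      (f := fun t => 1 / Real.log t) (by
        rw [Set.uIcc_of_le hXY]
        exact (inv_log_continuousOn hX).integrableOn_Icc)
    rwa [Set.uIcc_of_le hXY] at this
  have hφ : ContinuousOn (fun x : ℝ => Complex.exp (-s * Real.log x)) (Set.Icc X Y) := fun x hx =>
    (hasDerivAt_cexp_log s (by linarith [hx.1])).continuousAt.continuousWithinAt
  have hu : ContinuousOn (fun x : ℝ => ((1 / Real.log x : ℝ) : ℂ)) (Set.Icc X Y) :=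
    Complex.continuous_ofReal.comp_continuousOn (inv_log_continuousOn hX)
  refine ⟨?_, ?_⟩
  · apply ContinuousOn.intervalIntegrable
    rw [Set.uIcc_of_le hXY]
    exact hG.mul (dphi_continuousOn s (by linarith))
  · have := intervalIntegral.integral_mul_deriv_eq_deriv_mul_of_hasDeriv_right (a := X) (b := Y)
      (u := fun x => ((∫ t in X..x, 1 / Real.log t : ℝ) : ℂ))
      (v := fun x : ℝ => Complex.exp (-s * Real.log x))
      (u' := fun x => ((1 / Real.log x : ℝ) : ℂ)) (v' := dphi s)
      (by rwa [Set.uIcc_of_le hXY]) (by rwa [Set.uIcc_of_le hXY]) (fun x hx => by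
        rw [min_eq_left hXY, max_eq_right hXY] at hx
        exact ((hasDerivAt_log_integral hX hx).ofReal_comp).hasDerivWithinAt) (fun x hx => by
        rw [min_eq_left hXY, max_eq_right hXY] at hx
        exact (hasDerivAt_cexp_log s (by linarith [hx.1])).hasDerivWithinAt)
      (ContinuousOn.intervalIntegrable (by rwa [Set.uIcc_of_le hXY]))
      (ContinuousOn.intervalIntegrable (by
        rw [Set.uIcc_of_le hXY]; exact dphi_continuousOn s (by linarith)))
    rw [this]
    simp

/-- The oscillating main term is small: integrating `x ^ (-s)` against `1 / log x` by parts gains the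
factor `1 / |1 - s|`. -/
lemma main_term_le {s : ℂ} (hs : 1 ≤ s.re) (hs1 : 1 ≤ ‖1 - s‖) {X Y : ℝ} (hX : 1 < X) (hXY : X ≤ Y) :
    ‖∫ x in X..Y, ((1 / Real.log x : ℝ) : ℂ) * Complex.exp (-s * Real.log x)‖ ≤ 2 / Real.log X := by
  have hne : 1 - s ≠ 0 := fun h => by rw [h, norm_zero] at hs1; linarith
  have hd1 : ∀ x, 0 < x → HasDerivAt (fun x : ℝ => Complex.exp (-(s - 1) * Real.log x) / (1 - s))
      (Complex.exp (-s * Real.log x)) x := by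
    intro x hx
    refine ((hasDerivAt_cexp_log (s - 1) hx).div_const (1 - s)).congr_deriv ?_
    have e : Complex.exp (-s * Real.log x) = Complex.exp (-(s - 1) * Real.log x) * ((x⁻¹ : ℝ) : ℂ) := by
      rw [← Real.exp_log (inv_pos.2 hx), Real.log_inv, Complex.ofReal_exp, ← Complex.exp_add]
      congr 1; push_cast; ring
    rw [e]; field_simp; ring
  have hd2 : ∀ x : ℝ, 1 < x → HasDerivAt (fun x : ℝ => 1 / Real.log x) (-(1 / (x * Real.log x ^ 2))) x := by
    intro x hx
    have hl := (Real.log_pos hx).ne'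
    simp only [one_div]
    refine ((Real.hasDerivAt_log (show x ≠ 0 by linarith)).fun_inv hl).congr_deriv ?_
    rw [mul_inv]; ring
  have hc3 : ContinuousOn (fun x : ℝ => 1 / (x * Real.log x ^ 2)) (Set.Icc X Y) := by
    intro x hx
    have h1 : 1 < x := by linarith [hx.1]
    have hl := (Real.log_pos h1).ne'
    exact (continuousAt_const.div (continuousAt_id.mul ((Real.continuousAt_log (by linarith)).pow 2))
      (by simp; exact ⟨by linarith, by linarith, by linarith⟩)).continuousWithinAt
  have hle : ∀ x : ℝ, 1 ≤ x → ‖Complex.exp (-(s - 1) * Real.log x) / (1 - s)‖ ≤ 1 := by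
    intro x hx
    rw [norm_div, norm_cexp_log, div_le_one (by linarith)]
    refine le_trans (Real.exp_le_one_iff.2 ?_) hs1
    simp only [Complex.sub_re, Complex.one_re]
    nlinarith [Real.log_nonneg hx]
  have hlX := Real.log_pos hX
  have hlY : 0 < Real.log Y := Real.log_pos (by linarith)
  have hint3 : IntervalIntegrable (fun x : ℝ => 1 / (x * Real.log x ^ 2)) volume X Y :=
    ContinuousOn.intervalIntegrable (by rwa [Set.uIcc_of_le hXY])
  have hparts := intervalIntegral.integral_mul_deriv_eq_deriv_mul (a := X) (b := Y)
      (u := fun x : ℝ => ((1 / Real.log x : ℝ) : ℂ))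
      (v := fun x : ℝ => Complex.exp (-(s - 1) * Real.log x) / (1 - s))
      (u' := fun x => ((-(1 / (x * Real.log x ^ 2)) : ℝ) : ℂ))
      (v' := fun x => Complex.exp (-s * Real.log x))
      (fun x hx => by
        rw [Set.uIcc_of_le hXY] at hx
        exact (hd2 x (by linarith [hx.1])).ofReal_comp)
      (fun x hx => by
        rw [Set.uIcc_of_le hXY] at hx
        exact hd1 x (by linarith [hx.1]))
      (ContinuousOn.intervalIntegrable (by
        rw [Set.uIcc_of_le hXY]
        exact Complex.continuous_ofReal.comp_continuousOn hc3.neg))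
      (ContinuousOn.intervalIntegrable (by
        rw [Set.uIcc_of_le hXY]
        exact fun x hx => (hasDerivAt_cexp_log s (by linarith [hx.1])).continuousAt.continuousWithinAt))
  have hFTC : ∫ x in X..Y, 1 / (x * Real.log x ^ 2) = 1 / Real.log X - 1 / Real.log Y := by
    rw [intervalIntegral.integral_eq_sub_of_hasDerivAt (f := fun x : ℝ => -(1 / Real.log x))
      (fun x hx => by
        rw [Set.uIcc_of_le hXY] at hx
        exact (hd2 x (by linarith [hx.1])).fun_neg.congr_deriv (neg_neg _)) hint3]
    ring
  have hbd : ‖∫ x in X..Y, ((-(1 / (x * Real.log x ^ 2)) : ℝ) : ℂ) *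
      (Complex.exp (-(s - 1) * Real.log x) / (1 - s))‖ ≤ 1 / Real.log X - 1 / Real.log Y := by
    rw [← hFTC]
    refine intervalIntegral.norm_integral_le_of_norm_le hXY (Eventually.of_forall fun x hx => ?_) hint3
    have h1 : 1 < x := by linarith [hx.1]
    have hl := Real.log_pos h1
    rw [norm_mul, Complex.norm_real, norm_neg, Real.norm_of_nonneg (by positivity)]
    exact mul_le_of_le_one_right (by positivity) (hle x h1.le)
  rw [hparts]
  have n1 : ∀ x : ℝ, 1 < x → ‖((1 / Real.log x : ℝ) : ℂ) * (Complex.exp (-(s - 1) * Real.log x) / (1 - s))‖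
      ≤ 1 / Real.log x := by
    intro x hx
    have hl := Real.log_pos hx
    rw [norm_mul, Complex.norm_real, Real.norm_of_nonneg (by positivity)]
    exact mul_le_of_le_one_right (by positivity) (hle x hx.le)
  have n2 := n1 X hX
  have n3 := n1 Y (by linarith)
  refine (norm_sub_le _ _).trans ?_
  have := (norm_sub_le (((1 / Real.log Y : ℝ) : ℂ) * (Complex.exp (-(s - 1) * Real.log Y) / (1 - s)))
    (((1 / Real.log X : ℝ) : ℂ) * (Complex.exp (-(s - 1) * Real.log X) / (1 - s))))
  have e2 : 2 / Real.log X = 1 / Real.log X + 1 / Real.log X := by ring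
  rw [e2]
  linarith

end calculus

end BeurlingPrimes

/-! ### Comparing Euler products -/

namespace BeurlingPrimes

variable {p : ℕ → ℝ} {α : ℝ}

open MeasureTheory in
/-- Tail of the prime sum on a vertical line. -/
lemma tail_finite (H : BeurlingPrimes p α) : ∃ C x0 : ℝ, 0 < C ∧ 3 ≤ x0 ∧ ∀ (s : ℂ) (X Y : ℝ),
    1 ≤ s.re → 1 ≤ ‖1 - s‖ → x0 ≤ X → X ≤ Y →
    ‖∑ j ∈ primesLE p Y \ primesLE p X, Complex.exp (-s * Real.log (p j))‖
      ≤ C * (1 + ‖s‖) * X ^ (α - 1) + 2 / Real.log X := by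
  obtain ⟨C, x0, hC, hx0, hcount⟩ := H.count_interval
  have hα1 : 0 < 1 - α := by linarith [H.lt_one]
  have hα0 := H.pos
  refine ⟨C * (1 + 1 / (1 - α)), x0, by positivity, hx0, fun s X Y hs hs1 hX hXY => ?_⟩
  have hX1 : 1 < X := by linarith
  have hX0 : 0 < X := by linarith
  have hY0 : 0 < Y := by linarith
  set J := primesLE p Y \ primesLE p X with hJ
  have hJmem : ∀ j ∈ J, X < p j ∧ p j ≤ Y := by
    intro j hj
    rw [hJ, Finset.mem_sdiff, H.mem_primesLE, H.mem_primesLE, not_le] at hj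
    exact ⟨hj.2, hj.1⟩
  obtain ⟨hi1, hsum⟩ := partial_sum (p := p) J s hX0 hJmem
  obtain ⟨hi2, hmain⟩ := log_integral_parts s hX1 hXY
  have hN : ∀ x, X ≤ x → x ≤ Y → (∑ j ∈ J, (if p j ≤ x then (1:ℝ) else 0))
      = (primesLE p x).card - (primesLE p X).card := by
    intro x hx hxY
    rw [Finset.sum_boole]
    have e : J.filter (fun j => p j ≤ x) = primesLE p x \ primesLE p X := by
      ext j
      simp only [hJ, Finset.mem_filter, Finset.mem_sdiff, H.mem_primesLE]
      constructor
      · rintro ⟨⟨_, h1⟩, h2⟩; exact ⟨h2, h1⟩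
      · rintro ⟨h1, h2⟩; exact ⟨⟨h1.trans hxY, h2⟩, h1⟩
    rw [e, Finset.card_sdiff_of_subset (H.primesLE_mono hx),
      Nat.cast_sub (Finset.card_le_card (H.primesLE_mono hx))]
  have hcard : (J.card : ℂ) = (((primesLE p Y).card - (primesLE p X).card : ℝ) : ℂ) := by
    rw [← hN Y hXY le_rfl, Finset.sum_congr rfl (g := fun _ => (1:ℝ))
      (fun j hj => if_pos (hJmem j hj).2)]
    simp
  have hdiff : ∑ j ∈ J, Complex.exp (-s * Real.log (p j)) =
      (∫ x in X..Y, ((1 / Real.log x : ℝ) : ℂ) * Complex.exp (-s * Real.log x)) +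
      ((((primesLE p Y).card - (primesLE p X).card - ∫ t in X..Y, 1 / Real.log t : ℝ) : ℂ)
        * Complex.exp (-s * Real.log Y) - ∫ x in X..Y, (((∑ j ∈ J, (if p j ≤ x then 1 else 0) : ℝ) : ℂ)
          * dphi s x - ((∫ t in X..x, 1 / Real.log t : ℝ) : ℂ) * dphi s x)) := by
    rw [hsum, hmain, hcard, intervalIntegral.integral_sub hi1 hi2]
    push_cast; ring
  have hA := main_term_le hs hs1 hX1 hXY
  have hB : ‖(((primesLE p Y).card - (primesLE p X).card - ∫ t in X..Y, 1 / Real.log t : ℝ) : ℂ)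
        * Complex.exp (-s * Real.log Y)‖ ≤ C * X ^ (α - 1) := by
    rw [norm_mul, Complex.norm_real, Real.norm_eq_abs]
    calc _ ≤ C * Y ^ α * (1 / Y) := by
          gcongr
          · exact hcount X Y hX hXY
          · exact norm_cexp_log_le hs (by linarith)
      _ = C * Y ^ (α - 1) := by rw [Real.rpow_sub_one hY0.ne']; ring
      _ ≤ _ := by
          gcongr 1
          exact Real.rpow_le_rpow_of_nonpos hX0 hXY (by linarith)
  have h_int : IntervalIntegrable (fun x : ℝ => C * ‖s‖ * x ^ (α - 2)) volume X Y := by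
    apply ContinuousOn.intervalIntegrable
    rw [Set.uIcc_of_le hXY]
    intro x hx
    exact (continuousAt_const.mul (Real.continuousAt_rpow_const x _
      (Or.inl (by linarith [hx.1])))).continuousWithinAt
  have hD : ‖∫ x in X..Y, (((∑ j ∈ J, (if p j ≤ x then 1 else 0) : ℝ) : ℂ)
          * dphi s x - ((∫ t in X..x, 1 / Real.log t : ℝ) : ℂ) * dphi s x)‖
      ≤ C * ‖s‖ * (X ^ (α - 1) / (1 - α)) := by
    refine (intervalIntegral.norm_integral_le_of_norm_le hXY
      (Eventually.of_forall fun x hx => ?_) h_int).trans ?_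
    · have hx0 : 0 < x := by linarith [hx.1]
      rw [← sub_mul, ← Complex.ofReal_sub, hN x hx.1.le hx.2, norm_mul, Complex.norm_real,
        Real.norm_eq_abs]
      calc _ ≤ C * x ^ α * (‖s‖ * (1 / x * (1 / x))) := by
            gcongr
            · exact hcount X x hX hx.1.le
            · exact norm_dphi_le hs (by linarith [hx.1])
        _ = C * ‖s‖ * x ^ (α - 2) := by
            rw [Real.rpow_sub hx0, Real.rpow_two]; field_simp
    · rw [intervalIntegral.integral_const_mul, integral_rpow (Or.inr ⟨by linarith, by
        rw [Set.uIcc_of_le hXY]; intro h; linarith [h.1]⟩)]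
      refine mul_le_mul_of_nonneg_left ?_ (by positivity)
      rw [show α - 2 + 1 = -(1 - α) by ring, show α - 1 = -(1 - α) by ring, div_neg, ← neg_div]
      refine div_le_div_of_nonneg_right ?_ hα1.le
      have := Real.rpow_nonneg hY0.le (-(1 - α))
      linarith
  rw [hdiff]
  refine (norm_add_le _ _).trans ?_
  have h1 := norm_sub_le ((((primesLE p Y).card - (primesLE p X).card - ∫ t in X..Y, 1 / Real.log t : ℝ) : ℂ)
        * Complex.exp (-s * Real.log Y)) (∫ x in X..Y, (((∑ j ∈ J, (if p j ≤ x then 1 else 0) : ℝ) : ℂ)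
          * dphi s x - ((∫ t in X..x, 1 / Real.log t : ℝ) : ℂ) * dphi s x))
  have h2 : C * (1 + 1 / (1 - α)) * (1 + ‖s‖) * X ^ (α - 1) = C * X ^ (α - 1) +
      C * ‖s‖ * (X ^ (α - 1) / (1 - α)) + (C * ‖s‖ * X ^ (α - 1) + C * (X ^ (α - 1) / (1 - α))) := by
    field_simp; ring
  have h3 : 0 ≤ C * ‖s‖ * X ^ (α - 1) + C * (X ^ (α - 1) / (1 - α)) := by positivity
  linarith

/-- The function `-log (1 - z) - z` has derivative `z / (1 - z)`, so it is Lipschitz with constant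
`q / (1 - q)` on the disc of radius `q`. -/
lemma log_rem_le {q : ℝ} (hq : q < 1) {x y : ℂ} (hx : ‖x‖ ≤ q) (hy : ‖y‖ ≤ q) :
    ‖(-Complex.log (1 - x) - x) - (-Complex.log (1 - y) - y)‖ ≤ q / (1 - q) * ‖x - y‖ := by
  have hq0 : 0 ≤ q := (norm_nonneg _).trans hx
  refine Convex.norm_image_sub_le_of_norm_hasDerivWithin_le (s := Metric.closedBall (0:ℂ) q)
    (f := fun z => -Complex.log (1 - z) - z) (f' := fun z => z / (1 - z)) ?_ ?_
    (convex_closedBall _ _) (by simpa using hy) (by simpa using hx)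
  · intro z hz
    have hz' : ‖z‖ ≤ q := by simpa using hz
    have hsl : 1 - z ∈ Complex.slitPlane := by
      have := Complex.mem_slitPlane_of_norm_lt_one (z := -z) (by rw [norm_neg]; linarith)
      simpa [sub_eq_add_neg] using this
    have hne := Complex.slitPlane_ne_zero hsl
    have h1 : HasDerivAt (fun z : ℂ => 1 - z) (-1) z := by
      simpa using (hasDerivAt_id z).const_sub 1
    refine (((h1.clog hsl).fun_neg.fun_sub (hasDerivAt_id z)).congr_deriv ?_).hasDerivWithinAt
    field_simp
    ring
  · intro z hz
    have hz' : ‖z‖ ≤ q := by simpa using hz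
    have h1 : 1 - q ≤ ‖1 - z‖ := by
      have := norm_sub_norm_le (1:ℂ) z
      rw [norm_one] at this; linarith
    rw [norm_div]
    gcongr

lemma term_diff_le {s : ℂ} (hs : 1 ≤ s.re) {δ x : ℝ} (hδ : 0 ≤ δ) (hx : 1 ≤ x) :
    ‖Complex.exp (-s * Real.log x) - Complex.exp (-(s + δ) * Real.log x)‖ ≤ δ * Real.log x * (1 / x) := by
  have h1 : Complex.exp (-s * Real.log x) - Complex.exp (-(s + δ) * Real.log x)
      = Complex.exp (-s * Real.log x) * ((1 - Real.exp (-(δ * Real.log x)) : ℝ) : ℂ) := by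
    push_cast
    rw [mul_sub, mul_one, ← Complex.exp_add]
    congr 2; ring
  have hl := Real.log_nonneg hx
  have hu : 0 ≤ δ * Real.log x := mul_nonneg hδ hl
  have h2 := Real.add_one_le_exp (-(δ * Real.log x))
  have h3 : Real.exp (-(δ * Real.log x)) ≤ 1 := Real.exp_le_one_iff.2 (by linarith)
  rw [h1, norm_mul, Complex.norm_real, Real.norm_of_nonneg (by linarith), mul_comm]
  have := norm_cexp_log_le hs hx
  gcongr
  linarith

lemma summable_log_div_sq (H : BeurlingPrimes p α) :
    Summable fun j => Real.log (p j) * (1 / p j) * (1 / p j) := by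
  refine Summable.of_nonneg_of_le (fun j => ?_) (fun j => ?_)
    ((H.rpow_summable (s := 3 / 2) (by norm_num)).mul_left 2)
  · have := H.log_pos j; have := H.p_pos j; positivity
  · have h0 := H.p_pos j
    have h1 := Real.log_le_rpow_div h0.le (ε := 1 / 2) (by norm_num)
    calc _ ≤ (p j ^ (1 / 2 : ℝ) / (1 / 2)) * (1 / p j) * (1 / p j) := by gcongr
      _ = 2 * (p j ^ (1 / 2 : ℝ) * p j ^ (-2 : ℝ)) := by
          rw [Real.rpow_neg h0.le, Real.rpow_two]; field_simp
      _ = _ := by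
          rw [← Real.rpow_add h0]; norm_num

/-- Comparison of the logarithms of the partial Euler products at `s` and `s + δ`, uniformly in the
length `Y` of the products. Here `exp n` is a cut-off: primes below it contribute
`δ * (n + 1) ^ 2` by the mean value theorem, those above it are treated by `tail_finite`. -/
lemma log_diff (H : BeurlingPrimes p α) : ∃ (C : ℝ) (n0 : ℕ), 0 < C ∧ 1 ≤ n0 ∧ ∀ (n : ℕ) (s : ℂ) (δ Y : ℝ),
    n0 ≤ n → 1 ≤ s.re → 1 ≤ |s.im| → 0 ≤ δ → Real.exp n ≤ Y →
    ‖∑ j ∈ primesLE p Y, (-Complex.log (1 - Complex.exp (-s * Real.log (p j))) -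
      -Complex.log (1 - Complex.exp (-(s + δ) * Real.log (p j))))‖
      ≤ C * (δ * ((n:ℝ) + 1) ^ 2 + (1 + ‖s‖ + δ) * Real.exp (-((1 - α) * n)) + 1 / n) := by
  classical
  obtain ⟨C1, x0, hC1, hx0, htail⟩ := H.tail_finite
  obtain ⟨C2, hC2, hinv⟩ := H.sum_inv_le
  set R := ∑' j, Real.log (p j) * (1 / p j) * (1 / p j) with hR
  have hp0 := H.one_lt 0
  set q0 : ℝ := 1 - 1 / p 0 with hq0
  have hq0' : 0 < q0 := by
    rw [hq0, sub_pos, div_lt_one (by linarith)]; exact hp0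
  have hR0 : 0 ≤ R := tsum_nonneg fun j => by
    have := H.log_pos j; have := H.p_pos j; positivity
  refine ⟨R / q0 + C2 + 2 * C1 + 4, max 1 ⌈Real.log x0⌉₊, by positivity, le_max_left _ _, ?_⟩
  intro n s δ Y hn hs ht hδ hY
  have hn1 : (1:ℝ) ≤ n := by exact_mod_cast (le_max_left _ _).trans hn
  have hX : x0 ≤ Real.exp n := by
    rw [← Real.log_le_iff_le_exp (by linarith)]
    exact (Nat.le_ceil _).trans (by exact_mod_cast (le_max_right _ _).trans hn)
  set x : ℕ → ℂ := fun j => Complex.exp (-s * Real.log (p j)) with hx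
  set y : ℕ → ℂ := fun j => Complex.exp (-(s + δ) * Real.log (p j)) with hy
  have hs' : 1 ≤ (s + δ).re := by simp; linarith
  have hxn : ∀ j, ‖x j‖ ≤ 1 / p j := fun j => norm_cexp_log_le hs (H.one_lt j).le
  have hyn : ∀ j, ‖y j‖ ≤ 1 / p j := fun j => norm_cexp_log_le hs' (H.one_lt j).le
  have hxy : ∀ j, ‖x j - y j‖ ≤ δ * Real.log (p j) * (1 / p j) := fun j =>
    term_diff_le hs hδ (H.one_lt j).le
  have hnorm1 : ∀ w : ℂ, 1 ≤ |w.im| → 1 ≤ ‖1 - w‖ := fun w hw =>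
    hw.trans (by simpa using Complex.abs_im_le_norm (1 - w))
  have hsub : primesLE p (Real.exp n) ⊆ primesLE p Y := H.primesLE_mono hY
  have hdec : ∑ j ∈ primesLE p Y, (-Complex.log (1 - x j) - -Complex.log (1 - y j)) =
      ∑ j ∈ primesLE p Y, ((-Complex.log (1 - x j) - x j) - (-Complex.log (1 - y j) - y j)) +
      (∑ j ∈ primesLE p (Real.exp n), (x j - y j) +
        (∑ j ∈ primesLE p Y \ primesLE p (Real.exp n), x j -
          ∑ j ∈ primesLE p Y \ primesLE p (Real.exp n), y j)) := by
    rw [← Finset.sum_sub_distrib, add_comm (∑ j ∈ primesLE p (Real.exp n), (x j - y j)),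
      Finset.sum_sdiff hsub, ← Finset.sum_add_distrib]
    exact Finset.sum_congr rfl fun j _ => by ring
  have b1 : ‖∑ j ∈ primesLE p Y, ((-Complex.log (1 - x j) - x j) - (-Complex.log (1 - y j) - y j))‖
      ≤ R / q0 * δ := by
    calc _ ≤ ∑ j ∈ primesLE p Y, δ / q0 * (Real.log (p j) * (1 / p j) * (1 / p j)) := by
          refine (norm_sum_le _ _).trans (Finset.sum_le_sum fun j _ => ?_)
          have hpj := H.one_lt j
          have h0 : 1 / p j ≤ 1 / p 0 := one_div_le_one_div_of_le (by linarith) (H.mono (Nat.zero_le j))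
          have hlt : 1 / p j < 1 := by rw [div_lt_one (by linarith)]; exact hpj
          refine (log_rem_le hlt (hxn j) (hyn j)).trans ?_
          have hlp := H.log_pos j
          have hpp := H.p_pos j
          calc _ ≤ (1 / p j) / q0 * (δ * Real.log (p j) * (1 / p j)) := by
                gcongr
                · linarith
                · exact hxy j
            _ = _ := by ring
      _ = δ / q0 * ∑ j ∈ primesLE p Y, (Real.log (p j) * (1 / p j) * (1 / p j)) := by
          rw [Finset.mul_sum]
      _ ≤ δ / q0 * R := by
          gcongr
          exact H.summable_log_div_sq.sum_le_tsum _ fun j _ => by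
            have := H.log_pos j; have := H.p_pos j; positivity
      _ = _ := by ring
  have b2 : ‖∑ j ∈ primesLE p (Real.exp n), (x j - y j)‖ ≤ C2 * (δ * ((n:ℝ) + 1) ^ 2) := by
    calc _ ≤ ∑ j ∈ primesLE p (Real.exp n), δ * n * (1 / p j) := by
          refine (norm_sum_le _ _).trans (Finset.sum_le_sum fun j hj => (hxy j).trans ?_)
          have hpp := H.p_pos j
          have : Real.log (p j) ≤ n := by
            rw [Real.log_le_iff_le_exp hpp]; exact H.mem_primesLE.1 hj
          gcongr
      _ = δ * n * ∑ j ∈ primesLE p (Real.exp n), 1 / p j := by rw [Finset.mul_sum]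
      _ ≤ δ * (n + 1) * (C2 * (n + 1)) := by
          refine mul_le_mul (by gcongr; linarith) ?_ (Finset.sum_nonneg fun j _ => by
            have := H.p_pos j; positivity) (by positivity)
          · refine (hinv n).trans (mul_le_mul_of_nonneg_left ?_ hC2.le)
            have := Real.log_le_sub_one_of_pos (show (0:ℝ) < n + 1 by positivity)
            linarith
      _ = _ := by ring
  have eX : Real.exp (n:ℝ) ^ (α - 1) = Real.exp (-((1 - α) * n)) := by
    rw [← Real.exp_mul]; congr 1; ring
  have b3 : ‖∑ j ∈ primesLE p Y \ primesLE p (Real.exp n), x j‖ ≤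
      C1 * (1 + ‖s‖ + δ) * Real.exp (-((1 - α) * n)) + 2 / n := by
    have := htail s _ Y hs (hnorm1 s ht) hX hY
    rw [Real.log_exp, eX] at this
    have h6 : C1 * (1 + ‖s‖) * Real.exp (-((1 - α) * n)) ≤
        C1 * (1 + ‖s‖ + δ) * Real.exp (-((1 - α) * n)) :=
      mul_le_mul_of_nonneg_right (mul_le_mul_of_nonneg_left (by linarith) hC1.le) (Real.exp_pos _).le
    linarith
  have b4 : ‖∑ j ∈ primesLE p Y \ primesLE p (Real.exp n), y j‖ ≤
      C1 * (1 + ‖s‖ + δ) * Real.exp (-((1 - α) * n)) + 2 / n := by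
    have := htail (s + δ) _ Y hs' (hnorm1 _ (by simpa using ht)) hX hY
    rw [Real.log_exp, eX] at this
    have h5 := norm_add_le s (δ:ℂ)
    rw [Complex.norm_real, Real.norm_of_nonneg hδ] at h5
    have h6 : C1 * (1 + ‖s + δ‖) * Real.exp (-((1 - α) * n)) ≤
        C1 * (1 + ‖s‖ + δ) * Real.exp (-((1 - α) * n)) :=
      mul_le_mul_of_nonneg_right (mul_le_mul_of_nonneg_left (by linarith) hC1.le) (Real.exp_pos _).le
    linarith
  change ‖∑ j ∈ primesLE p Y, (-Complex.log (1 - x j) - -Complex.log (1 - y j))‖ ≤ _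
  rw [hdec]
  refine (norm_add_le _ _).trans ?_
  have c1 := norm_add_le (∑ j ∈ primesLE p (Real.exp n), (x j - y j))
        (∑ j ∈ primesLE p Y \ primesLE p (Real.exp n), x j -
          ∑ j ∈ primesLE p Y \ primesLE p (Real.exp n), y j)
  have c2 := norm_sub_le (∑ j ∈ primesLE p Y \ primesLE p (Real.exp n), x j)
          (∑ j ∈ primesLE p Y \ primesLE p (Real.exp n), y j)
  set E := (1 + ‖s‖ + δ) * Real.exp (-((1 - α) * n)) with hE
  have hE0 : 0 ≤ E := by positivity
  have hDn : δ ≤ δ * ((n:ℝ) + 1) ^ 2 := le_mul_of_one_le_right hδ (by nlinarith)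
  set D := δ * ((n:ℝ) + 1) ^ 2 with hD
  have hinv0 : 0 ≤ 1 / (n:ℝ) := by positivity
  have hRq : 0 ≤ R / q0 := by positivity
  have e2 : 2 / (n:ℝ) = 2 * (1 / n) := by ring
  rw [mul_assoc, ← hE, e2] at b3 b4
  have f1 : R / q0 * δ ≤ R / q0 * D := by gcongr
  have hD0 : 0 ≤ D := hδ.trans hDn
  have f2 := mul_nonneg hRq hE0
  have f3 := mul_nonneg hRq hinv0
  have f4 := mul_nonneg hC2.le hE0
  have f5 := mul_nonneg hC2.le hinv0
  have f6 := mul_nonneg hC1.le hD0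
  have f7 := mul_nonneg hC1.le hinv0
  have : (R / q0 + C2 + 2 * C1 + 4) * (D + E + 1 / n) = R / q0 * D + R / q0 * E + R / q0 * (1 / n)
     + C2 * D + C2 * E + C2 * (1 / n) + 2 * (C1 * D) + 2 * (C1 * E) + 2 * (C1 * (1 / n)) + 4 * D + 4 * E
     + 4 * (1 / n) := by ring
  rw [this]
  linarith

end BeurlingPrimes

/-! ### Shifting off the 1-line -/

namespace BeurlingZeta

variable {p ν : ℕ → ℝ} {d : ℕ → ℕ} {α : ℝ} {Z : ℂ → ℂ}

/-- A logarithm of the Euler product to the right of the 1-line, as a convergent sum of principal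
logarithms. -/
lemma exists_log (H : BeurlingZeta p ν d α Z) {s : ℂ} (hs : 1 < s.re) :
    ∃ L : ℂ, HasSum (fun j => -Complex.log (1 - Complex.exp (-s * Real.log (p j)))) L ∧
      Z s = Complex.exp L := by
  have hp := H.primes
  have e : ∀ j, (p j : ℂ) ^ (-s) = Complex.exp (-s * Real.log (p j)) := fun j => by
    rw [Complex.cpow_def_of_ne_zero (by exact_mod_cast (hp.p_pos j).ne'),
      ← Complex.ofReal_log (hp.p_pos j).le, mul_comm]
  have hn : ∀ j, ‖Complex.exp (-s * Real.log (p j))‖ = p j ^ (-s.re) := fun j => by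
    rw [Complex.norm_exp, Real.rpow_def_of_pos (hp.p_pos j)]
    congr 1; simp; ring
  have hne : ∀ j, 1 - Complex.exp (-s * Real.log (p j)) ≠ 0 := fun j h => by
    have h1 := hp.rpow_lt_one (σ := s.re) (by linarith) j
    rw [← hn, ← sub_eq_zero.1 h, norm_one] at h1
    exact lt_irrefl _ h1
  have hsum : Summable fun j => -Complex.exp (-s * Real.log (p j)) := by
    refine Summable.neg (Summable.of_norm_bounded (hp.rpow_summable hs) fun j => (hn j).le)
  have hlog := Complex.summable_log_one_add_of_summable hsum
  simp only [← sub_eq_add_neg] at hlog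
  obtain ⟨L, hL⟩ := hlog
  refine ⟨-L, hL.neg, ?_⟩
  have h1 := (Complex.hasProd_of_hasSum_log hne hL).inv₀ (Complex.exp_ne_zero _)
  rw [H.product s hs, Complex.exp_neg, ← h1.tprod_eq]
  exact tprod_congr fun j => by rw [e]

/-- Replacing `Z (1 + i t)` by `Z (1 + δ + i t)` for `1 ≤ t ≤ T`, with a small relative error. The
parameter `n` is the logarithm of the cut-off for primes in `BeurlingPrimes.log_diff`. -/
lemma shift (H : BeurlingZeta p ν d α Z) : ∃ (C : ℝ) (n0 : ℕ), 0 < C ∧ 1 ≤ n0 ∧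
    ∀ (n : ℕ) (t T δ : ℝ), n0 ≤ n → 1 ≤ t → t ≤ T → 0 < δ → δ ≤ 1 →
    C * (δ * ((n:ℝ) + 1) ^ 2 + (4 + T) * Real.exp (-((1 - α) * n)) + 1 / n) ≤ 1 →
    ‖Z (1 + t * Complex.I) - Z (1 + δ + t * Complex.I)‖ ≤
      2 * (C * (δ * ((n:ℝ) + 1) ^ 2 + (4 + T) * Real.exp (-((1 - α) * n)) + 1 / n)) *
        ‖Z (1 + δ + t * Complex.I)‖ := by
  obtain ⟨C, n0, hC, hn0, h⟩ := H.primes.log_diff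
  refine ⟨C, n0, hC, hn0, fun n t T δ hn ht htT hδ hδ1 hB => ?_⟩
  set B := C * (δ * ((n:ℝ) + 1) ^ 2 + (4 + T) * Real.exp (-((1 - α) * n)) + 1 / n) with hBdef
  -- The Euler product is only available off the 1-line: compare `1 + η` with `1 + δ` and let `η → 0`.
  have key : ∀ η : ℝ, 0 < η → η ≤ δ → ‖Z (1 + η + t * Complex.I) - Z (1 + δ + t * Complex.I)‖ ≤
      2 * B * ‖Z (1 + δ + t * Complex.I)‖ := by
    intro η hη hηδ
    obtain ⟨L1, hL1, e1⟩ := H.exists_log (s := 1 + η + t * Complex.I) (by simpa using hη)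
    obtain ⟨L2, hL2, e2⟩ := H.exists_log (s := 1 + δ + t * Complex.I) (by simpa using hδ)
    have es : (1 + δ + t * Complex.I : ℂ) = (1 + η + t * Complex.I) + ((δ - η : ℝ) : ℂ) := by
      push_cast; ring
    have hnorm : ‖(1 + η + t * Complex.I : ℂ)‖ ≤ 2 + T := by
      rw [show (1 + η + t * Complex.I : ℂ) = ((1 + η : ℝ) : ℂ) + (t:ℂ) * Complex.I by push_cast; ring]
      refine (norm_add_le _ _).trans ?_
      rw [Complex.norm_real, norm_mul, Complex.norm_real, Complex.norm_I,
        Real.norm_of_nonneg (by linarith), Real.norm_of_nonneg (by linarith)]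
      linarith
    have hatTop : Tendsto (primesLE p) atTop atTop :=
      tendsto_atTop_finset_of_monotone (fun a b hab => H.primes.primesLE_mono hab)
        fun j => ⟨p j, H.primes.mem_primesLE.2 le_rfl⟩
    have hlim := ((hL1.sub hL2).comp hatTop).norm
    have hw : ‖L1 - L2‖ ≤ B := by
      refine le_of_tendsto hlim ?_
      filter_upwards [eventually_ge_atTop (Real.exp n)] with Y hY
      have := h n (1 + η + t * Complex.I) (δ - η) Y hn (by simp; linarith)
        (by simpa using ht.trans (le_abs_self t)) (by linarith) hY
      simp only [Function.comp]
      rw [es]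
      refine this.trans ?_
      rw [hBdef]
      have : 1 + ‖(1 + η + t * Complex.I : ℂ)‖ + (δ - η) ≤ 4 + T := by linarith
      gcongr
      linarith
    have h3 := Complex.norm_exp_sub_one_le (hw.trans hB)
    have h4 : Z (1 + η + t * Complex.I) - Z (1 + δ + t * Complex.I) =
        (Complex.exp (L1 - L2) - 1) * Z (1 + δ + t * Complex.I) := by
      rw [e1, e2, sub_mul, ← Complex.exp_add]; simp
    rw [h4, norm_mul]
    refine mul_le_mul_of_nonneg_right (h3.trans ?_) (norm_nonneg _)
    linarith
  have hcont : Tendsto (fun η : ℝ => Z (1 + η + t * Complex.I)) (nhdsWithin 0 (Set.Ioi 0))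
      (nhds (Z (1 + t * Complex.I))) := by
    have hmem : (1 + t * Complex.I : ℂ) ∈ {s : ℂ | 1 ≤ s.re ∧ s ≠ 1} := by
      refine ⟨by simp, fun h => ?_⟩
      have := congrArg Complex.im h
      simp at this; linarith
    refine (H.cont _ hmem).tendsto.comp (tendsto_nhdsWithin_iff.2 ⟨?_, ?_⟩)
    · have : Continuous fun η : ℝ => (1 + η + t * Complex.I : ℂ) := by fun_prop
      have h2 := this.tendsto 0
      simp only [Complex.ofReal_zero, add_zero] at h2
      exact h2.mono_left nhdsWithin_le_nhds
    · filter_upwards [self_mem_nhdsWithin] with η hη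
      have hη' : (0:ℝ) < η := hη
      refine ⟨by simpa using hη'.le, fun h => ?_⟩
      have := congrArg Complex.im h
      simp at this; linarith
  refine le_of_tendsto (hcont.sub_const _).norm ?_
  filter_upwards [Ioc_mem_nhdsGT hδ] with η hη
  exact key η hη.1 hη.2

end BeurlingZeta

/-! ### Mean square on the 1-line -/

/-- Weighted Cauchy-Schwarz inequality for the difference of two squares. -/
lemma abs_sq_sub_sq_le (z a : ℂ) {η : ℝ} (hη : 0 < η) :
    |‖z‖ ^ 2 - ‖a‖ ^ 2| ≤ (1 + 1 / η) * ‖z - a‖ ^ 2 + η * ‖a‖ ^ 2 := by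
  have h1 := abs_norm_sub_norm_le z a
  set x := ‖z‖
  set y := ‖a‖
  set w := ‖z - a‖
  have hy : 0 ≤ y := norm_nonneg _
  have hw : 0 ≤ w := norm_nonneg _
  have hx : 0 ≤ x := norm_nonneg _
  have h2 : |x ^ 2 - y ^ 2| = |x - y| * (x + y) := by
    rw [show x ^ 2 - y ^ 2 = (x - y) * (x + y) by ring, abs_mul, abs_of_nonneg (add_nonneg hx hy)]
  have h3 : x ≤ y + w := by linarith [(abs_le.1 h1).2]
  have h4 : 2 * y * w ≤ 1 / η * w ^ 2 + η * y ^ 2 := by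
    have : 0 ≤ (w - η * y) ^ 2 / η := by positivity
    have e : (w - η * y) ^ 2 / η = 1 / η * w ^ 2 + η * y ^ 2 - 2 * y * w := by field_simp; ring
    linarith
  calc _ = |x - y| * (x + y) := h2
    _ ≤ w * (2 * y + w) := mul_le_mul h1 (by linarith) (by linarith) hw
    _ ≤ _ := by linarith

/-- Mean values pass to the limit along mean-square approximation. -/
lemma mean_limit {z : ℝ → ℂ} {A : ℕ → ℝ → ℂ} {S e : ℕ → ℝ} {S0 : ℝ}
    (hz : ContinuousOn z (Set.Ici 1)) (hA : ∀ m, Continuous (A m))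
    (hS : ∀ m, Tendsto (fun T : ℝ => (1 / T) * ∫ t in (1:ℝ)..T, ‖A m t‖ ^ 2) atTop (nhds (S m)))
    (hS0 : Tendsto S atTop (nhds S0)) (he : Tendsto e atTop (nhds 0))
    (hd : ∀ m, ∀ η > 0, ∀ᶠ T : ℝ in atTop, (1 / T) * ∫ t in (1:ℝ)..T, ‖z t - A m t‖ ^ 2 ≤ e m + η) :
    Tendsto (fun T : ℝ => (1 / T) * ∫ t in (1:ℝ)..T, ‖z t‖ ^ 2) atTop (nhds S0) := by
  have hdiff : ∀ m, ∀ η > 0, ∀ T : ℝ, 1 ≤ T →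
      |(1 / T) * (∫ t in (1:ℝ)..T, ‖z t‖ ^ 2) - (1 / T) * ∫ t in (1:ℝ)..T, ‖A m t‖ ^ 2|
      ≤ (1 + 1 / η) * ((1 / T) * ∫ t in (1:ℝ)..T, ‖z t - A m t‖ ^ 2) +
        η * ((1 / T) * ∫ t in (1:ℝ)..T, ‖A m t‖ ^ 2) := by
    intro m η hη T hT
    have hzT : ContinuousOn z (Set.uIcc 1 T) := hz.mono (by
      rw [Set.uIcc_of_le hT]; exact fun x hx => hx.1)
    have i1 : IntervalIntegrable (fun t => ‖z t‖ ^ 2) MeasureTheory.volume 1 T :=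
      (hzT.norm.pow 2).intervalIntegrable
    have i2 : IntervalIntegrable (fun t => ‖A m t‖ ^ 2) MeasureTheory.volume 1 T :=
      ((hA m).norm.pow 2).intervalIntegrable _ _
    have i3 : IntervalIntegrable (fun t => ‖z t - A m t‖ ^ 2) MeasureTheory.volume 1 T :=
      ((hzT.sub (hA m).continuousOn).norm.pow 2).intervalIntegrable
    have h1 : |∫ t in (1:ℝ)..T, (‖z t‖ ^ 2 - ‖A m t‖ ^ 2)| ≤
        ∫ t in (1:ℝ)..T, ((1 + 1 / η) * ‖z t - A m t‖ ^ 2 + η * ‖A m t‖ ^ 2) := by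
      rw [← Real.norm_eq_abs]
      exact intervalIntegral.norm_integral_le_of_norm_le hT
        (Eventually.of_forall fun t _ => abs_sq_sub_sq_le (z t) (A m t) hη)
        ((i3.const_mul _).add (i2.const_mul _))
    rw [intervalIntegral.integral_sub i1 i2,
      intervalIntegral.integral_add (i3.const_mul _) (i2.const_mul _),
      intervalIntegral.integral_const_mul, intervalIntegral.integral_const_mul] at h1
    have hT0 : 0 < 1 / T := by positivity
    rw [← mul_sub, abs_mul, abs_of_pos hT0]
    calc _ ≤ 1 / T * _ := mul_le_mul_of_nonneg_left h1 hT0.le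
      _ = _ := by ring
  rw [Metric.tendsto_atTop']
  intro ε hε
  set η : ℝ := ε / (8 * (|S0| + 2)) with hηdef
  have hη : 0 < η := by positivity
  have hη' : η * (|S0| + 2) = ε / 8 := by rw [hηdef]; field_simp
  -- The weight of the approximation error once the squares are compared with `abs_sq_sub_sq_le`.
  set k : ℝ := 1 + 1 / η with hk
  have hk0 : 0 < k := by positivity
  have ev1 : ∀ᶠ m in atTop, e m < ε / (8 * k) := he.eventually_lt_const (by positivity)
  have ev2 : ∀ᶠ m in atTop, |S m - S0| < min 1 (ε / 8) := by
    have := (tendsto_order.1 (tendsto_iff_norm_sub_tendsto_zero.1 hS0)).2 (min 1 (ε / 8)) (by positivity)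
    simpa [Real.norm_eq_abs] using this
  obtain ⟨m, hm1, hm2⟩ := (ev1.and ev2).exists
  have ev3 : ∀ᶠ T : ℝ in atTop,
      |(1 / T) * (∫ t in (1:ℝ)..T, ‖A m t‖ ^ 2) - S m| < min 1 (ε / 8) := by
    have := (tendsto_order.1 (tendsto_iff_norm_sub_tendsto_zero.1 (hS m))).2 (min 1 (ε / 8)) (by positivity)
    simpa [Real.norm_eq_abs] using this
  have ev := (ev3.and (hd m (ε / (8 * k)) (by positivity))).and (eventually_ge_atTop (1:ℝ))
  obtain ⟨T0, hT0⟩ := eventually_atTop.1 ev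
  refine ⟨T0, fun T hT => ?_⟩
  obtain ⟨⟨h1, h2⟩, h3⟩ := hT0 T hT.le
  have h4 := hdiff m η hη T h3
  rw [Real.dist_eq]
  set a := (1 / T) * ∫ t in (1:ℝ)..T, ‖z t‖ ^ 2
  set b := (1 / T) * ∫ t in (1:ℝ)..T, ‖A m t‖ ^ 2
  set c := (1 / T) * ∫ t in (1:ℝ)..T, ‖z t - A m t‖ ^ 2
  have h5 : k * c ≤ ε / 4 := by
    have : k * c ≤ k * (ε / (8 * k) + ε / (8 * k)) := by gcongr; linarith
    have e : k * (ε / (8 * k) + ε / (8 * k)) = ε / 4 := by field_simp; ring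
    linarith
  have h6 : η * b ≤ ε / 8 := by
    rw [← hη']
    gcongr
    have := abs_lt.1 (lt_of_lt_of_le h1 (min_le_left _ _))
    have := abs_lt.1 (lt_of_lt_of_le hm2 (min_le_left _ _))
    have := le_abs_self S0
    linarith
  have h7 := abs_le.1 h4
  have h8 := abs_lt.1 (lt_of_lt_of_le h1 (min_le_right _ _))
  have h9 := abs_lt.1 (lt_of_lt_of_le hm2 (min_le_right _ _))
  rw [abs_lt]
  constructor <;> linarith

namespace BeurlingZeta

variable {p ν : ℕ → ℝ} {d : ℕ → ℕ} {α : ℝ} {Z : ℂ → ℂ}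

/-- There is a choice of `δ` as a small negative power of `T`, admissible for `mean_tail`, for which
the relative error in `shift` tends to `0`. -/
lemma exists_shift (H : BeurlingZeta p ν d α Z) (N : ℕ) : ∃ δ B : ℝ → ℝ,
    Tendsto δ atTop (nhds 0) ∧ Tendsto B atTop (nhds 0) ∧ ∀ᶠ T : ℝ in atTop,
      1 ≤ T ∧ 0 < δ T ∧ δ T ≤ 1 ∧ 1 ≤ δ T ^ N * T ∧ ∀ t : ℝ, 1 ≤ t → t ≤ T →
      ‖Z (1 + t * Complex.I) - Z (1 + δ T + t * Complex.I)‖ ≤ B T * ‖Z (1 + δ T + t * Complex.I)‖ := by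
  obtain ⟨C, n0, hC, hn0, h⟩ := H.shift
  have hα1 : 0 < 1 - α := by linarith [H.primes.lt_one]
  have hα0 := H.primes.pos
  set G : ℝ := 1 / (1 - α) with hG
  have hG1 : 1 ≤ G := by rw [hG, one_le_div hα1]; linarith
  set K : ℕ := 4 * (N + 1) with hK
  -- Put `T = x ^ K`. With `δ = x ^ (-4)` and a cut-off `n` of order `x / (1 - α)`, the three error terms
  -- in `shift` are of order `x ^ (-2)`, `x ^ K * exp (-x)` and `1 / x`.
  set x : ℝ → ℝ := fun T => T ^ (1 / (K:ℝ)) with hx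
  have hK0 : (0:ℝ) < 1 / (K:ℝ) := by rw [hK]; positivity
  have hxt : Tendsto x atTop atTop := tendsto_rpow_atTop hK0
  set b : ℝ → ℝ := fun y => C * ((G + 2) ^ 2 * y⁻¹ + (4 * (y ^ 0 * Real.exp (-y)) + y ^ K * Real.exp (-y)) + y⁻¹)
    with hb
  have hbt : Tendsto b atTop (nhds 0) := by
    have h1 := ((tendsto_inv_atTop_zero (𝕜 := ℝ)).const_mul ((G + 2) ^ 2)).add
      (((Real.tendsto_pow_mul_exp_neg_atTop_nhds_zero 0).const_mul 4).add
        (Real.tendsto_pow_mul_exp_neg_atTop_nhds_zero K))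
    have h2 := (h1.add (tendsto_inv_atTop_zero (𝕜 := ℝ))).const_mul C
    simpa [hb] using h2
  have hdt : Tendsto (fun y : ℝ => (y ^ 4)⁻¹) atTop (nhds 0) :=
    tendsto_inv_atTop_zero.comp (tendsto_pow_atTop (by norm_num))
  refine ⟨fun T => (x T ^ 4)⁻¹, fun T => 2 * b (x T), hdt.comp hxt, ?_, ?_⟩
  · simpa using (hbt.comp hxt).const_mul 2
  filter_upwards [eventually_ge_atTop (1:ℝ), hxt.eventually_ge_atTop (max 1 (n0:ℝ)),
    (hbt.comp hxt).eventually_le_const one_pos] with T hT hxT hbT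
  have hx1 : 1 ≤ x T := (le_max_left _ _).trans hxT
  have hxn : (n0:ℝ) ≤ x T := (le_max_right _ _).trans hxT
  have hxK : x T ^ K = T := by
    rw [hx]; dsimp only
    rw [← Real.rpow_natCast, ← Real.rpow_mul (by linarith), one_div, inv_mul_cancel₀, Real.rpow_one]
    rw [hK]; positivity
  simp only [Function.comp] at hbT
  set y := x T with hy
  have hy0 : 0 < y := by linarith
  refine ⟨hT, by positivity, inv_le_one_of_one_le₀ (one_le_pow₀ hx1), ?_, fun t ht htT => ?_⟩
  · rw [← hxK, hK, show 4 * (N + 1) = 4 * N + 4 by ring, pow_add, pow_mul, ← mul_assoc, ← mul_pow,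
      inv_mul_cancel₀ (by positivity), one_pow, one_mul]
    exact one_le_pow₀ hx1
  have hn1 : G * y ≤ ⌈G * y⌉₊ := Nat.le_ceil _
  have hn2 : (⌈G * y⌉₊ : ℝ) < G * y + 1 := Nat.ceil_lt_add_one (by positivity)
  have hyn : y ≤ ⌈G * y⌉₊ := (le_mul_of_one_le_left hy0.le hG1).trans hn1
  set n := ⌈G * y⌉₊ with hn
  have hnn0 : n0 ≤ n := by exact_mod_cast hxn.trans hyn
  have hB : C * ((y ^ 4)⁻¹ * ((n:ℝ) + 1) ^ 2 + (4 + T) * Real.exp (-((1 - α) * n)) + 1 / n) ≤ b y := by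
    rw [hb]; dsimp only
    have t1 : (y ^ 4)⁻¹ * ((n:ℝ) + 1) ^ 2 ≤ (G + 2) ^ 2 * y⁻¹ := by
      calc _ ≤ (y ^ 4)⁻¹ * ((G + 2) * y) ^ 2 := by
            gcongr
            linarith
        _ = (G + 2) ^ 2 * (y ^ 2)⁻¹ := by field_simp
        _ ≤ _ := by
            gcongr
            nlinarith
    have t2 : (4 + T) * Real.exp (-((1 - α) * n)) ≤ 4 * (y ^ 0 * Real.exp (-y)) + y ^ K * Real.exp (-y) := by
      have : y ≤ (1 - α) * n := by
        have : (1 - α) * (G * y) = y := by rw [hG]; field_simp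
        rw [← this]; gcongr
      calc _ ≤ (4 + T) * Real.exp (-y) := by gcongr
        _ = _ := by rw [hxK]; ring
    have t3 : 1 / (n:ℝ) ≤ y⁻¹ := by
      rw [one_div]; gcongr
    gcongr
  refine (h n t T _ hnn0 ht htT (by positivity) (inv_le_one_of_one_le₀ (one_le_pow₀ hx1))
    (hB.trans hbT)).trans ?_
  gcongr

lemma continuousOn_line (H : BeurlingZeta p ν d α Z) {δ : ℝ} (hδ : 0 ≤ δ) :
    ContinuousOn (fun t : ℝ => Z (1 + δ + t * Complex.I)) (Set.Ici 1) := by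
  refine H.cont.comp (Continuous.continuousOn (by fun_prop)) fun t ht => ⟨by simpa using hδ, fun h => ?_⟩
  have ht' : (1:ℝ) ≤ t := ht
  have := congrArg Complex.im h
  simp at this; linarith

/-- On the 1-line the truncations of the Dirichlet series approximate `Z` in mean square. -/
lemma approx (H : BeurlingZeta p ν d α Z) : ∃ e : ℕ → ℝ, Tendsto e atTop (nhds 0) ∧
    ∀ m, ∀ η > 0, ∀ᶠ T : ℝ in atTop, (1 / T) * ∫ t in (1:ℝ)..T, ‖Z (1 + t * Complex.I) -
      dpoly (coef ν d) (fun m => Real.log (ν m)) (Finset.range m) t‖ ^ 2 ≤ e m + η := by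
  obtain ⟨N, ε, hε, htail⟩ := H.mean_tail
  obtain ⟨δ, B, hδ, hB, hshift⟩ := H.exists_shift N
  refine ⟨fun m => 3 * ε m, by simpa using hε.const_mul 3, fun m η hη => ?_⟩
  set l : ℕ → ℝ := fun m => Real.log (ν m) with hl
  -- `κ x` bounds the change of the truncated series when it is moved from `1 + x` to the 1-line.
  set κ : ℝ → ℝ := fun x => ∑ i ∈ Finset.range m, (coef ν d i - dcoef ν d x i) with hκ
  have hκt : Tendsto (fun T => κ (δ T)) atTop (nhds 0) := by
    have hc : Continuous κ := by
      rw [hκ]; unfold dcoef; fun_prop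
    have h0 : κ 0 = 0 := by
      rw [hκ]; simp [dcoef]
    have := (hc.tendsto 0).comp hδ
    rwa [h0] at this
  have herr : Tendsto (fun T => 3 * (B T ^ 2 * ε 0 + κ (δ T) ^ 2)) atTop (nhds 0) := by
    simpa using (((hB.pow 2).mul_const (ε 0)).add (hκt.pow 2)).const_mul 3
  filter_upwards [hshift, herr.eventually_le_const hη] with T ⟨hT, hδ0, hδ1, hδN, hsh⟩ hη'
  have m0 := htail T (δ T) hT hδ0 hδ1 hδN 0
  -- Without truncation, `m0` bounds the mean square of `Z (1 + δ + i t)`.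
  have m1 := htail T (δ T) hT hδ0 hδ1 hδN m
  have hsubset : Set.uIcc 1 T ⊆ Set.Ici 1 := by
    rw [Set.uIcc_of_le hT]; exact fun x hx => hx.1
  set u : ℝ → ℂ := fun t => Z (1 + δ T + t * Complex.I) with hu
  have hd0 : ∀ t, dpoly (dcoef ν d (δ T)) l (Finset.range 0) t = 0 := fun t => by simp [dpoly]
  simp only [hd0, sub_zero] at m0
  have hcu : ContinuousOn u (Set.uIcc 1 T) := (H.continuousOn_line hδ0.le).mono hsubset
  have hcz : ContinuousOn (fun t : ℝ => Z (1 + t * Complex.I)) (Set.uIcc 1 T) := by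
    simpa using (H.continuousOn_line le_rfl).mono hsubset
  have i0 : IntervalIntegrable (fun t => ‖u t‖ ^ 2) MeasureTheory.volume 1 T :=
    (hcu.norm.pow 2).intervalIntegrable
  have i1 : IntervalIntegrable
      (fun t => ‖u t - dpoly (dcoef ν d (δ T)) l (Finset.range m) t‖ ^ 2) MeasureTheory.volume 1 T :=
    ((hcu.sub (dpoly_continuous _ l (Finset.range m)).continuousOn).norm.pow 2).intervalIntegrable
  have i2 : IntervalIntegrable (fun t : ℝ =>
      ‖Z (1 + t * Complex.I) - dpoly (coef ν d) l (Finset.range m) t‖ ^ 2) MeasureTheory.volume 1 T :=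
    ((hcz.sub (dpoly_continuous _ l (Finset.range m)).continuousOn).norm.pow 2).intervalIntegrable
  have ic : IntervalIntegrable (fun _ : ℝ => κ (δ T) ^ 2) MeasureTheory.volume 1 T :=
    intervalIntegrable_const
  have hpt : ∀ t ∈ Set.Icc 1 T, ‖Z (1 + t * Complex.I) - dpoly (coef ν d) l (Finset.range m) t‖ ^ 2 ≤
      3 * (B T ^ 2 * ‖u t‖ ^ 2 + ‖u t - dpoly (dcoef ν d (δ T)) l (Finset.range m) t‖ ^ 2 + κ (δ T) ^ 2) := by
    intro t ht
    have a1 := hsh t ht.1 ht.2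
    have a2 : ‖dpoly (dcoef ν d (δ T)) l (Finset.range m) t - dpoly (coef ν d) l (Finset.range m) t‖ ≤ κ (δ T) := by
      have := norm_dpoly_le (fun i => coef ν d i - dcoef ν d (δ T) i) l
        (fun i => sub_nonneg.2 (H.dcoef_le hδ0.le i)) (Finset.range m) t
      rw [norm_sub_rev]
      refine le_trans (le_of_eq ?_) this
      congr 1
      simp only [dpoly]
      rw [← Finset.sum_sub_distrib]
      refine Finset.sum_congr rfl fun i _ => ?_
      push_cast; ring
    have a3 : ‖Z (1 + t * Complex.I) - dpoly (coef ν d) l (Finset.range m) t‖ ≤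
        B T * ‖u t‖ + ‖u t - dpoly (dcoef ν d (δ T)) l (Finset.range m) t‖ + κ (δ T) := by
      have e : Z (1 + t * Complex.I) - dpoly (coef ν d) l (Finset.range m) t =
        (Z (1 + t * Complex.I) - u t) + (u t - dpoly (dcoef ν d (δ T)) l (Finset.range m) t) +
        (dpoly (dcoef ν d (δ T)) l (Finset.range m) t - dpoly (coef ν d) l (Finset.range m) t) := by ring
      rw [e]
      refine (norm_add_le _ _).trans ?_
      have := norm_add_le (Z (1 + t * Complex.I) - u t) (u t - dpoly (dcoef ν d (δ T)) l (Finset.range m) t)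
      linarith
    set X := B T * ‖u t‖
    set Y := ‖u t - dpoly (dcoef ν d (δ T)) l (Finset.range m) t‖
    set W := κ (δ T)
    calc _ ≤ (X + Y + W) ^ 2 := by gcongr
      _ ≤ 3 * (X ^ 2 + Y ^ 2 + W ^ 2) := by
          nlinarith [sq_nonneg (X - Y), sq_nonneg (X - W), sq_nonneg (Y - W)]
      _ = _ := by rw [mul_pow]
  have h_int := intervalIntegral.integral_mono_on hT i2
    ((((i0.const_mul (B T ^ 2)).add i1).add ic).const_mul 3) hpt
  rw [intervalIntegral.integral_const_mul,
    intervalIntegral.integral_add ((i0.const_mul (B T ^ 2)).add i1) ic,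
    intervalIntegral.integral_add (i0.const_mul (B T ^ 2)) i1,
    intervalIntegral.integral_const_mul, intervalIntegral.integral_const] at h_int
  have hT0 : 0 < 1 / T := by positivity
  have hTT : 1 / T * ((T - 1) * κ (δ T) ^ 2) ≤ κ (δ T) ^ 2 := by
    rw [← mul_assoc]
    refine mul_le_of_le_one_left (sq_nonneg _) ?_
    rw [one_div, inv_mul_le_iff₀ (by linarith)]; linarith
  have h5 := mul_le_mul_of_nonneg_left h_int hT0.le
  have h6 := mul_le_mul_of_nonneg_left m0 (sq_nonneg (B T))
  rw [smul_eq_mul] at h5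
  refine h5.trans ?_
  calc _ = 3 * (B T ^ 2 * (1 / T * ∫ t in (1:ℝ)..T, ‖u t‖ ^ 2) +
      1 / T * (∫ t in (1:ℝ)..T, ‖u t - dpoly (dcoef ν d (δ T)) l (Finset.range m) t‖ ^ 2) +
      1 / T * ((T - 1) * κ (δ T) ^ 2)) := by ring
    _ ≤ 3 * ε m + η := by linarith

theorem mean_square (H : BeurlingZeta p ν d α Z) :
    Tendsto (fun T : ℝ => (1 / T) * ∫ t in (1:ℝ)..T, ‖Z (1 + t * Complex.I)‖ ^ 2)
      atTop (nhds (∑' m, (d m : ℝ) ^ 2 / ν m ^ 2)) := by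
  obtain ⟨e, he, hd⟩ := H.approx
  have hinj : Function.Injective fun m => Real.log (ν m) := fun a b hab =>
    H.strictMono.injective (Real.log_injOn_pos (H.nu_pos a) (H.nu_pos b) hab)
  refine mean_limit (z := fun t : ℝ => Z (1 + t * Complex.I)) (S := fun m => ∑ i ∈ Finset.range m, coef ν d i ^ 2)
    (by simpa using H.continuousOn_line le_rfl)
    (fun m => dpoly_continuous (coef ν d) (fun m => Real.log (ν m)) (Finset.range m))
    (fun m => mean_tendsto _ _ hinj _) ?_ he hd
  have := H.summable_sq.hasSum.tendsto_sum_nat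
  simpa only [H.coef_eq, div_pow] using this

end BeurlingZeta

/-- for a Beurling prime system `1 < p 0 ≤ p 1 ≤ …` with
`π_P(x) = Li(x) + O(x^α)` (`0 < α < 1`), the Beurling zeta function
`ζ_P(s) = ∏ (1 − p j^{−s})⁻¹ = ∑ d n / ν n ^ s` (extended continuously to the
1-line) satisfies `lim_{T→∞} (1/T)∫_1^T |ζ_P(1+it)|² dt = ∑ d n²/ν n²`,
and the series converges. -/
theorem stmt_12
    (p ν : ℕ → ℝ) (d : ℕ → ℕ) (α : ℝ) (Z : ℂ → ℂ)
    (hp1 : ∀ j, 1 < p j) (hpm : Monotone p) (hpt : Tendsto p atTop atTop)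
    (hν : StrictMono ν) (hν1 : ν 0 = 1) (hνt : Tendsto ν atTop atTop)
    (hα : 0 < α) (hα1 : α < 1)
    (hπ : (fun x : ℝ => (∑' j, if p j ≤ x then (1:ℝ) else 0)
        - ∫ t in (2:ℝ)..x, 1 / Real.log t) =O[atTop] (fun x : ℝ => x ^ α))
    (hZser : ∀ s : ℂ, 1 < s.re → Z s = ∑' m, (d m : ℂ) / (ν m : ℂ) ^ s)
    (hZprod : ∀ s : ℂ, 1 < s.re → Z s = ∏' j, (1 - (p j : ℂ) ^ (-s))⁻¹)
    (hZc : ContinuousOn Z {s : ℂ | 1 ≤ s.re ∧ s ≠ 1}) :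
    Tendsto (fun T : ℝ => (1 / T) * ∫ t in (1:ℝ)..T, ‖Z (1 + t * Complex.I)‖ ^ 2)
        atTop (nhds (∑' m, (d m : ℝ) ^ 2 / ν m ^ 2)) ∧
      Summable (fun m => (d m : ℝ) ^ 2 / ν m ^ 2) := by
  have H : BeurlingZeta p ν d α Z :=
    { primes := ⟨hp1, hpm, hpt, hα, hα1, hπ⟩
      strictMono := hν
      one_le := fun m => hν1 ▸ hν.monotone (Nat.zero_le m)
      series := hZser
      product := hZprod
      cont := hZc }
  exact ⟨H.mean_square, H.summable_sq⟩
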